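/- arXiv:0802.2824 — 3 statements merged into one kernel-verified Lean document; each statement's English description precedes it below -/
import Mathlib

section
/- Let r be even. The map ρ sending π ∈ G(r,n) to the linear endomorphism of V_{r,n} defined by ρ(π)C_w := sign_e(π,w) · C_{π w πᵗ} (for w ∈ I_{r,n}) is a group homomorphism into GL(V_{r,n}), and for every π ∈ G(r,n) the trace of ρ(π) equals ∑_{χ ∈ Irr(G(r,n))} χ(π); i.e. ρ is a Gelfand model for G(r,n). -/
open Finset CategoryTheory

/-- The wreath product `ℤ_r ≀ S_n`: elements are pairs `(σ, z)` with
`σ` a permutation of `{1,…,n}` and `z ∈ (ℤ/rℤ)^n`.  The multiplication is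
`(σ,c)·(τ,d) = (στ, (c_{τ⁻¹(i)} + d_i)_i)`, where in the paper's convention
permutations compose left-to-right; translated to Lean's convention
(`(σ * τ) x = σ (τ x)`) this reads `(σ,c)·(τ,d) = (σ * τ, fun i => c (τ i) + d i)`,
i.e. the semidirect product of `Fin n → ZMod r` by `Equiv.Perm (Fin n)`
acting by permuting coordinates. -/
def Wreath (r n : ℕ) : Type := Equiv.Perm (Fin n) × (Fin n → ZMod r)

namespace Wreath

variable {r n : ℕ}

instance : Group (Wreath r n) where
  mul v w := ⟨v.1 * w.1, fun i => v.2 (w.1 i) + w.2 i⟩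
  one := ⟨1, 0⟩
  inv v := ⟨v.1⁻¹, fun i => -v.2 (v.1⁻¹ i)⟩
  mul_assoc a b c := Prod.ext (mul_assoc _ _ _) (funext fun i => add_assoc _ _ _)
  one_mul a := by
    refine Prod.ext (one_mul _) (funext fun i => ?_)
    show (0 : Fin n → ZMod r) (a.1 i) + a.2 i = a.2 i
    simp
  mul_one a := by
    refine Prod.ext (mul_one _) (funext fun i => ?_)
    show a.2 ((1 : Equiv.Perm (Fin n)) i) + (0 : Fin n → ZMod r) i = a.2 i
    simp
  inv_mul_cancel a := by
    refine Prod.ext (inv_mul_cancel _) (funext fun i => ?_)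
    show -a.2 (a.1⁻¹ (a.1 i)) + a.2 i = (0 : Fin n → ZMod r) i
    simp

instance [NeZero r] : Fintype (Wreath r n) :=
  inferInstanceAs (Fintype (Equiv.Perm (Fin n) × (Fin n → ZMod r)))

instance : DecidableEq (Wreath r n) :=
  inferInstanceAs (DecidableEq (Equiv.Perm (Fin n) × (Fin n → ZMod r)))

theorem mul_def (v w : Wreath r n) :
    v * w = ⟨v.1 * w.1, fun i => v.2 (w.1 i) + w.2 i⟩ := rfl

theorem one_def : (1 : Wreath r n) = ⟨1, 0⟩ := rfl

theorem inv_def (v : Wreath r n) : v⁻¹ = ⟨v.1⁻¹, fun i => -v.2 (v.1⁻¹ i)⟩ := rfl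

/-- The bar operation `(σ, z) ↦ (σ, −z)`. -/
def bar (v : Wreath r n) : Wreath r n := ⟨v.1, -v.2⟩

theorem bar_mul (v w : Wreath r n) : bar (v * w) = bar v * bar w := by
  refine Prod.ext rfl (funext fun i => ?_)
  show -(v.2 (w.1 i) + w.2 i) = -v.2 (w.1 i) + -w.2 i
  ring

theorem bar_bar (v : Wreath r n) : bar (bar v) = v := by
  refine Prod.ext rfl ?_
  show - - v.2 = v.2
  simp

/-- `bar` as a group automorphism. -/
def barAut : Wreath r n ≃* Wreath r n where
  toFun := bar
  invFun := bar
  left_inv := bar_bar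
  right_inv := bar_bar
  map_mul' := bar_mul

theorem bar_inv (v : Wreath r n) : bar v⁻¹ = (bar v)⁻¹ :=
  map_inv (barAut : Wreath r n ≃* Wreath r n) v

/-- `vᵗ := (v̄)⁻¹`. -/
def tr (v : Wreath r n) : Wreath r n := (bar v)⁻¹

/-- Conjugation `w ↦ π w πᵗ` maps absolute involutions to absolute involutions. -/
theorem conj_absInv {w : Wreath r n} (hw : w * bar w = 1) (π : Wreath r n) :
    (π * w * tr π) * bar (π * w * tr π) = 1 := by
  have h1 : bar (π * w * tr π) = bar π * bar w * π⁻¹ := by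
    rw [bar_mul, bar_mul, tr, bar_inv, bar_bar]
  calc (π * w * tr π) * bar (π * w * tr π)
      = π * (w * bar w) * π⁻¹ := by rw [h1, tr]; group
    _ = 1 := by rw [hw]; group

end Wreath

/-- The set of inversions of `σ`, encoded as ordered pairs `(i,j)` with `i < j`
and `σ j < σ i` (one representative for each unordered pair `{i,j}` with
`(j−i)(σ(j)−σ(i)) < 0`). -/
def invPairs {n : ℕ} (σ : Equiv.Perm (Fin n)) : Finset (Fin n × Fin n) :=
  Finset.univ.filter fun p => p.1 < p.2 ∧ σ p.2 < σ p.1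

/-- The 2-cycles of an involution `u`, encoded as ordered pairs `(i,j)` with `i < j`,
`u i = j` and `u j = i` (one representative for each unordered pair `{i,j}`). -/
def pairSet {n : ℕ} (u : Equiv.Perm (Fin n)) : Finset (Fin n × Fin n) :=
  Finset.univ.filter fun p => p.1 < p.2 ∧ u p.1 = p.2 ∧ u p.2 = p.1

/-- `sign_o(π,w) := (−1)^{#(Inv(|π|) ∩ Pair(|w|))}`. -/
def signO {r n : ℕ} (π w : Wreath r n) : ℤ :=
  (-1) ^ ((invPairs π.1 ∩ pairSet w.1).card)

/-- A family of finite-dimensional complex representations forming a complete set of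
pairwise non-isomorphic irreducible representations of `G`. -/
def IsCompleteIrrFamily {G : Type} [Monoid G] {ι : Type} (V : ι → FDRep ℂ G) : Prop :=
  (∀ i, Simple (V i)) ∧ (∀ i j, Nonempty (V i ≅ V j) → i = j) ∧
    ∀ W : FDRep ℂ G, Simple W → ∃ i, Nonempty (V i ≅ W)

/-- `I_{r,n}`: the set of absolute involutions in `G(r,n)`, i.e. elements `w` with
`w · w̄ = id`. -/
def AbsInv (r n : ℕ) : Type := {w : Wreath r n // w * Wreath.bar w = 1}

instance (r n : ℕ) : DecidableEq (AbsInv r n) :=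
  inferInstanceAs (DecidableEq {w : Wreath r n // w * Wreath.bar w = 1})

instance (r n : ℕ) [NeZero r] : Fintype (AbsInv r n) :=
  inferInstanceAs (Fintype {w : Wreath r n // w * Wreath.bar w = 1})

/-- The conjugation action `w ↦ π w πᵗ` on absolute involutions. -/
def conjAbs {r n : ℕ} (π : Wreath r n) (w : AbsInv r n) : AbsInv r n :=
  ⟨π * w.1 * Wreath.tr π, Wreath.conj_absInv w.2 π⟩

/-- `B(π,w)` (for even `r`): the set of indices `i` with `|w|(i) = i`,
`z_w(i) = 2k+1` odd with `k ∈ {0,…,r/2−1}`, and `k + z_π(i) ∈ {r/2,…,r−1}`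
(computed in `ℤ/rℤ`, identified with `{0,…,r−1}` via `ZMod.val`). -/
noncomputable def Bset {r n : ℕ} (π w : Wreath r n) : Finset (Fin n) := by
  classical exact Finset.univ.filter fun i => w.1 i = i ∧ ∃ k ∈ Finset.range (r / 2),
    (w.2 i).val = 2 * k + 1 ∧ r / 2 ≤ (((k : ℕ) : ZMod r) + π.2 i).val

/-- `sign_e(π,w) := (−1)^{#B(π,w)} · (−1)^{#(Inv(|π|) ∩ Pair(|w|))}`. -/
noncomputable def signE {r n : ℕ} (π w : Wreath r n) : ℤ :=
  (-1) ^ (Bset π w).card * (-1) ^ ((invPairs π.1 ∩ pairSet w.1).card)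

/-!
Both sides equal the number of `x` with `π xᵗ = x`.

Every element of `ℤ_r ≀ S_(k+1)` is carried to its transpose by conjugation with an element of
`ℤ_r ≀ S_k`. So along the chain `ℤ_r ≀ S_0 ≤ ⋯ ≤ ℤ_r ≀ S_n` every centralizer of a group algebra in
the next one is fixed by the transposition, hence commutative, and refining idempotents step by step
gives complete orthogonal primitive idempotents `e` of `ℂ[ℤ_r ≀ S_n]` fixed by the transposition,
whose corners are lines. In this Gelfand–Tsetlin system the trace of `x ↦ π xᵗ` on the group algebra
is the sum of the traces of `π` on one minimal left ideal for each irreducible representation.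

The trace of `ρ(π)` is a sum over the involutions `u` commuting with `|π|` of a sign times a signed
number of colourings. The finite Fourier transform turns the latter into the sum of
`∏ i, exp (2π√-1 θ_i z_π(i) / r)` over the colourings `θ` invariant under `u` and `|π|`. For a fixed
`θ`, half turns of even cycles cancel involutions of opposite sign, and those left over correspond
to the square roots of `|π|` that preserve `θ`; Fourier inversion over each square root then counts
the solutions of `π xᵗ = x`.
-/

namespace GelfandModel

universe u

section Algebra

theorem eq_zero_of_forall_isNilpotent_mul {R : Type*} [Ring R] [IsSemisimpleRing R] {y : R}
    (hy : ∀ b, IsNilpotent (b * y)) : y = 0 := by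
  have hjac : y ∈ Ideal.jacobson (⊥ : Ideal R) := by
    refine Ideal.mem_jacobson_iff.2 fun b => ?_
    obtain ⟨u, hu⟩ := (hy b).isUnit_add_one
    refine ⟨(u⁻¹ : Rˣ), (Submodule.mem_bot R).2 ?_⟩
    rw [mul_assoc, ← mul_add_one, ← hu, Units.inv_mul, sub_self]
  rwa [Ideal.jacobson_bot, IsSemisimpleRing.jacobson_eq_bot, Submodule.mem_bot] at hjac

variable {k : Type*} [Field k]

theorem exists_completeOrthogonalIdempotents_of_isReduced [IsAlgClosed k]
    (R : Type*) [CommRing R] [Algebra k R] [Module.Finite k R] [IsReduced R] :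
    ∃ f : MaximalSpectrum R → R, ∃ _ : Fintype (MaximalSpectrum R),
      CompleteOrthogonalIdempotents f ∧ (∀ i, f i ≠ 0) ∧
        ∀ i x, ∃ c : k, f i * x = c • f i := by
  classical
  have := IsArtinianRing.of_finite k R
  let _ := Fintype.ofFinite (MaximalSpectrum R)
  let E := IsArtinianRing.equivPi R
  refine ⟨fun m => E.symm (Pi.single m 1), inferInstance,
    (CompleteOrthogonalIdempotents.single fun m : MaximalSpectrum R => R ⧸ m.asIdeal).map
      (E.symm : (∀ m : MaximalSpectrum R, R ⧸ m.asIdeal) →+* R), fun m hm => ?_, fun m x => ?_⟩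
  · have : Nontrivial (R ⧸ m.asIdeal) := Ideal.Quotient.nontrivial_iff.2 m.isMaximal.ne_top
    rw [map_eq_zero_iff E.symm E.symm.injective, Pi.single_eq_zero_iff] at hm
    exact one_ne_zero hm
  · have := m.isMaximal
    let _ : Field (R ⧸ m.asIdeal) := Ideal.Quotient.field _
    obtain ⟨c, hc⟩ :=
      (IsAlgClosed.algebraMap_bijective_of_isIntegral (k := k) (K := R ⧸ m.asIdeal)).2 (E x m)
    refine ⟨c, E.injective ?_⟩
    rw [Algebra.smul_def, map_mul, map_mul, AlgEquiv.apply_symm_apply]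
    ext j
    rcases eq_or_ne j m with rfl | hj
    · simp only [Pi.mul_apply, Pi.single_eq_same, one_mul, mul_one]
      exact hc.symm
    · simp [Pi.single_eq_of_ne hj]

variable {A : Type u} [Ring A] [Algebra k A] {ι : Type*}

/-- A multiplicity-free splitting of a subalgebra `B` compatible with the transposition `T`: a
complete system of nonzero orthogonal idempotents `e a ∈ B`, each fixed by `T`, whose corners
`e a * B * e a` are one-dimensional. It plays the role of a Gelfand–Tsetlin basis which is
orthonormal for symmetric bilinear forms with adjoint `T`. -/
structure IsTransposeSplitting [Fintype ι] (T : A →ₗ[k] A) (B : Subalgebra k A) (e : ι → A) :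
    Prop extends CompleteOrthogonalIdempotents e where
  mem : ∀ a, e a ∈ B
  ne_zero : ∀ a, e a ≠ 0
  map_eq : ∀ a, T (e a) = e a
  corner : ∀ a, ∀ x ∈ B, ∃ c : k, e a * x * e a = c • e a

theorem isTransposeSplitting_bot [Nontrivial A] {T : A →ₗ[k] A} (hT1 : T 1 = 1) :
    IsTransposeSplitting T ⊥ fun _ : Unit => 1 where
  toCompleteOrthogonalIdempotents := CompleteOrthogonalIdempotents.unique_iff.2 rfl
  mem _ := one_mem _
  ne_zero _ := one_ne_zero
  map_eq _ := hT1
  corner _ x hx := by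
    obtain ⟨c, rfl⟩ := Algebra.mem_bot.1 hx
    exact ⟨c, by rw [one_mul, mul_one, Algebra.algebraMap_eq_smul_one]⟩

theorem eq_sum_corner_of_commute [Fintype ι] {e : ι → A} (he : CompleteOrthogonalIdempotents e)
    {x : A} (hx : ∀ a, e a * x = x * e a) : x = ∑ a, e a * x * e a := by
  have hcorner (a : ι) : e a * x * e a = e a * x := by rw [mul_assoc, ← hx, ← mul_assoc, he.idem a]
  simp only [hcorner]
  rw [← Finset.sum_mul, he.complete, one_mul]

theorem corner_commute {e : ι → A} (he : OrthogonalIdempotents e) (a b : ι) (x : A) :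
    e b * (e a * x * e a) = e a * x * e a * e b := by
  rcases eq_or_ne b a with rfl | hba
  · rw [mul_assoc _ (e b) (e b), he.idem b, ← mul_assoc, ← mul_assoc, he.idem b]
  · rw [mul_assoc _ (e a) (e b), he.ortho hba.symm, ← mul_assoc, ← mul_assoc, he.ortho hba]
    simp only [zero_mul, mul_zero]

section Centralizer

/-- The elements of `C` commuting with every `e a`, that is, the block-diagonal part of `C`. -/
def relCentralizer (C : Subalgebra k A) (e : ι → A) : Subalgebra k A :=
  C ⊓ Subalgebra.centralizer k (Set.range e)

variable {C : Subalgebra k A} {e : ι → A}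

theorem mem_relCentralizer {x : A} :
    x ∈ relCentralizer C e ↔ x ∈ C ∧ ∀ a, e a * x = x * e a := by
  simp only [relCentralizer, Algebra.mem_inf, Subalgebra.mem_centralizer_iff, Set.forall_mem_range]

theorem corner_mem_relCentralizer (he : OrthogonalIdempotents e) (heC : ∀ a, e a ∈ C) {x : A}
    (hx : x ∈ C) (a : ι) : e a * x * e a ∈ relCentralizer C e :=
  mem_relCentralizer.2 ⟨mul_mem (mul_mem (heC a) hx) (heC a), fun b => corner_commute he a b x⟩

theorem map_eq_self_of_mem_relCentralizer [Fintype ι] {T : A →ₗ[k] A}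
    (he : CompleteOrthogonalIdempotents e)
    (hfix : ∀ a, ∀ x ∈ C, T (e a * x * e a) = e a * x * e a) {x : A}
    (hx : x ∈ relCentralizer C e) : T x = x := by
  obtain ⟨hxC, hxe⟩ := mem_relCentralizer.1 hx
  rw [eq_sum_corner_of_commute he hxe, map_sum]
  exact Finset.sum_congr rfl fun a _ => hfix a x hxC

/-- If `x ^ 2 = 0`, then `b * (e a * x)` squares to zero for every `b` in `C`, because the corner
`e a * b * e a` commutes with `x`. -/
theorem eq_zero_of_sq_eq_zero_of_mem_relCentralizer [Fintype ι] [IsSemisimpleRing C]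
    (he : CompleteOrthogonalIdempotents e) (heC : ∀ a, e a ∈ C)
    (hcomm : ∀ x ∈ relCentralizer C e, ∀ y ∈ relCentralizer C e, x * y = y * x) {x : A}
    (hx : x ∈ relCentralizer C e) (hsq : x * x = 0) : x = 0 := by
  obtain ⟨hxC, hxe⟩ := mem_relCentralizer.1 hx
  have hblock (a : ι) : e a * x = 0 := by
    let y : C := ⟨e a * x, mul_mem (heC a) hxC⟩
    suffices y = 0 from congrArg Subtype.val this
    refine eq_zero_of_forall_isNilpotent_mul fun b => ⟨2, Subtype.ext ?_⟩
    have hswap : x * (e a * b * e a) = e a * b * e a * x :=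
      hcomm _ hx _ (corner_mem_relCentralizer he.toOrthogonalIdempotents heC b.2 a)
    calc ((b * y) ^ 2 : C).val = b * (e a * x) * (b * (e a * x)) := by rw [pow_two]; rfl
      _ = b * (x * (e a * b * e a) * x) := by rw [hxe]; simp only [mul_assoc]; rw [hxe]
      _ = b * (e a * b * e a) * (x * x) := by rw [hswap]; simp only [mul_assoc]
      _ = 0 := by rw [hsq, mul_zero]
  rw [← one_mul x, ← he.complete, Finset.sum_mul]
  exact Finset.sum_eq_zero fun a _ => hblock a

end Centralizer

namespace IsTransposeSplitting

variable {T : A →ₗ[k] A} {B C : Subalgebra k A} {e : ι → A}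

/-- The refined idempotents are the primitive idempotents of `relCentralizer C e`: this algebra is
commutative since `T` is at once the identity and antimultiplicative on it. -/
theorem exists_of_le [Fintype ι] [IsAlgClosed k] [Module.Finite k A] [IsSemisimpleRing C]
    (hT : ∀ x y, T (x * y) = T y * T x) (he : IsTransposeSplitting T B e) (hBC : B ≤ C)
    (hfix : ∀ a, ∀ x ∈ C, T (e a * x * e a) = e a * x * e a) :
    ∃ (κ : Type u) (_ : Fintype κ) (f : κ → A), IsTransposeSplitting T C f := by
  let Z := relCentralizer C e
  have heC (a : ι) : e a ∈ C := hBC (he.mem a)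
  have hTZ (x : A) (hx : x ∈ Z) : T x = x :=
    map_eq_self_of_mem_relCentralizer he.toCompleteOrthogonalIdempotents hfix hx
  have hcomm (x : A) (hx : x ∈ Z) (y : A) (hy : y ∈ Z) : x * y = y * x := by
    rw [← hTZ _ (mul_mem hx hy), hT, hTZ x hx, hTZ y hy]
  have heZ (a : ι) : e a ∈ Z := by
    simpa only [mul_one, (he.idem a).eq] using
      corner_mem_relCentralizer he.toOrthogonalIdempotents heC (one_mem C) a
  let _ : CommRing Z :=
    { (inferInstance : Ring Z) with mul_comm := fun x y => Subtype.ext (hcomm _ x.2 _ y.2) }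
  have : IsReduced Z := (isReduced_iff_pow_one_lt 2 one_lt_two).2 fun x hx =>
    Subtype.ext <| eq_zero_of_sq_eq_zero_of_mem_relCentralizer he.toCompleteOrthogonalIdempotents
      heC hcomm x.2 (congrArg Subtype.val ((pow_two x).symm.trans hx))
  have : Module.Finite k Z := inferInstanceAs (Module.Finite k (Subalgebra.toSubmodule Z))
  obtain ⟨f, hfin, hf, hf0, hfc⟩ := exists_completeOrthogonalIdempotents_of_isReduced (k := k) Z
  have hscalar (i : MaximalSpectrum Z) (x : A) (hx : x ∈ Z) : ∃ c : k, (f i : A) * x = c • f i :=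
    (hfc i ⟨x, hx⟩).imp fun c hc => congrArg Subtype.val hc
  have hidem (i : MaximalSpectrum Z) : (f i : A) * f i = f i :=
    congrArg Subtype.val (hf.idem i).eq
  refine ⟨MaximalSpectrum Z, hfin, fun i => f i,
    { toCompleteOrthogonalIdempotents := hf.map Z.val.toRingHom
      mem := fun i => (mem_relCentralizer.1 (f i).2).1
      ne_zero := fun i hi => hf0 i (Subtype.ext hi)
      map_eq := fun i => hTZ _ (f i).2
      corner := fun i x hx => ?_ }⟩
  obtain ⟨hfC, hfe⟩ := mem_relCentralizer.1 (f i).2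
  have hmem : (f i : A) * x * f i ∈ Z :=
    mem_relCentralizer.2 ⟨mul_mem (mul_mem hfC hx) hfC, fun a => by
      obtain ⟨c, hc⟩ := hscalar i (e a) (heZ a)
      rw [mul_assoc _ _ (e a), hc, ← mul_assoc, ← mul_assoc, hfe, hc, smul_mul_assoc,
        smul_mul_assoc, mul_smul_comm]⟩
  obtain ⟨c, hc⟩ := hscalar i _ hmem
  exact ⟨c, by rw [← hc, ← mul_assoc, ← mul_assoc, hidem]⟩

end IsTransposeSplitting

end Algebra

section GroupAlgebra

open MonoidAlgebra

variable (k : Type*) {G : Type*} [Field k] [Group G]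

/-- The group algebra of the subgroup `H`, as a subalgebra of the group algebra of `G`. -/
noncomputable def groupSubalgebra (H : Subgroup G) : Subalgebra k (MonoidAlgebra k G) :=
  (mapDomainAlgHom k k H.subtype).range

variable {k}

theorem mem_groupSubalgebra {H : Subgroup G} {x : MonoidAlgebra k G} :
    x ∈ groupSubalgebra k H ↔ ∃ y, mapDomainAlgHom k k H.subtype y = x :=
  AlgHom.mem_range _

theorem single_mem_groupSubalgebra {H : Subgroup G} {h : G} (hh : h ∈ H) (c : k) :
    single h c ∈ groupSubalgebra k H :=
  mem_groupSubalgebra.2 ⟨single ⟨h, hh⟩ c, mapDomain_single⟩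

theorem sum_coeff_smul_single {H : Subgroup G} [Fintype H] {x : MonoidAlgebra k G}
    (hx : x ∈ groupSubalgebra k H) : ∑ h : H, x.coeff h • single (h : G) 1 = x := by
  obtain ⟨y, rfl⟩ := mem_groupSubalgebra.1 hx
  have hy : y = ∑ h : H, single h (y.coeff h) := by
    rw [← Finsupp.sum_fintype _ _ fun h => single_zero h, sum_coeff_single]
  conv_rhs => rw [hy, map_sum]
  refine Finset.sum_congr rfl fun h _ => ?_
  have hcoeff : (mapDomainAlgHom k k H.subtype y).coeff h = y.coeff h :=
    Finsupp.mapDomain_apply H.subtype_injective y.coeff h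
  rw [hcoeff, smul_single, smul_eq_mul, mul_one]
  exact mapDomain_single.symm

theorem groupSubalgebra_mono {H K : Subgroup G} (hHK : H ≤ K) :
    groupSubalgebra k H ≤ groupSubalgebra k K := by
  intro _ hx
  obtain ⟨x, rfl⟩ := mem_groupSubalgebra.1 hx
  refine mem_groupSubalgebra.2 ⟨mapDomainAlgHom k k (Subgroup.inclusion hHK) x, ?_⟩
  rw [← AlgHom.comp_apply, ← mapDomainAlgHom_comp, Subgroup.subtype_comp_inclusion]

theorem groupSubalgebra_bot : groupSubalgebra k (⊥ : Subgroup G) = ⊥ := by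
  refine eq_bot_iff.2 fun x hx => ?_
  rw [← sum_coeff_smul_single hx, Fintype.sum_unique]
  exact Algebra.mem_bot.2 ⟨_, Algebra.algebraMap_eq_smul_one _⟩

theorem groupSubalgebra_top : groupSubalgebra k (⊤ : Subgroup G) = ⊤ := by
  refine eq_top_iff.2 fun x _ => ?_
  induction x using MonoidAlgebra.induction_linear with
  | zero => exact zero_mem _
  | add x y hx hy => exact add_mem (hx trivial) (hy trivial)
  | single g c => exact single_mem_groupSubalgebra (Subgroup.mem_top g) c

theorem isSemisimpleRing_groupSubalgebra (H : Subgroup G) [Finite H] [NeZero (Nat.card H : k)] :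
    IsSemisimpleRing (groupSubalgebra k H) :=
  (mapDomainAlgHom k k H.subtype).rangeRestrict.toRingHom.isSemisimpleRing_of_surjective
    (AlgHom.rangeRestrict_surjective _)

theorem mapDomainLinearMap_mul {t : G → G} (ht : ∀ g h, t (g * h) = t h * t g)
    (x y : MonoidAlgebra k G) : mapDomainLinearMap k k t (x * y) =
      mapDomainLinearMap k k t y * mapDomainLinearMap k k t x := by
  induction x using MonoidAlgebra.induction_linear with
  | zero => simp
  | add x x' hx hx' => simp only [add_mul, mul_add, map_add, hx, hx']
  | single g c =>
    induction y using MonoidAlgebra.induction_linear with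
    | zero => simp
    | add y y' hy hy' => simp only [add_mul, mul_add, map_add, hy, hy']
    | single h d => simp only [single_mul_single, mapDomainLinearMap_single, ht, mul_comm c]

section ConjSum

variable (k) in
/-- The sum of the conjugates of an element of the group algebra by the elements of `H`, a
multiple of the projection onto the centralizer of `H`. -/
noncomputable def conjSum (H : Subgroup G) [Fintype H] :
    MonoidAlgebra k G →ₗ[k] MonoidAlgebra k G :=
  ∑ h : H, LinearMap.mulLeftRight k (single (h : G) 1, single (h : G)⁻¹ 1)

variable {H : Subgroup G} [Fintype H]

theorem conjSum_apply (x : MonoidAlgebra k G) :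
    conjSum k H x = ∑ h : H, single (h : G) 1 * x * single (h : G)⁻¹ 1 := by
  simp only [conjSum, LinearMap.sum_apply, LinearMap.mulLeftRight_apply]

theorem conjSum_single (g : G) :
    conjSum k H (single g 1) = ∑ h : H, single (h * g * (h : G)⁻¹) 1 := by
  simp only [conjSum_apply, single_mul_single, mul_one]

theorem conjSum_single_conj (g : G) {l : G} (hl : l ∈ H) :
    conjSum k H (single (l * g * l⁻¹) 1) = conjSum k H (single g 1) := by
  rw [conjSum_single, conjSum_single, ← Equiv.sum_comp (Equiv.mulRight (⟨l, hl⟩ : H))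
    fun h : H => single ((h : G) * g * (h : G)⁻¹) (1 : k)]
  simp only [Equiv.coe_mulRight, Subgroup.coe_mul, mul_inv_rev, mul_assoc]

theorem single_mul_conjSum {l : G} (hl : l ∈ H) (x : MonoidAlgebra k G) :
    single l 1 * conjSum k H x = conjSum k H x * single l 1 := by
  rw [conjSum_apply, Finset.mul_sum, Finset.sum_mul,
    ← Equiv.sum_comp (Equiv.mulLeft (⟨l, hl⟩ : H)) fun h : H =>
      single (h : G) 1 * x * single (h : G)⁻¹ 1 * single l 1]
  simp only [Equiv.coe_mulLeft, Subgroup.coe_mul, mul_inv_rev, mul_assoc, single_mul_single,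
    inv_mul_cancel, mul_one]
  simp only [← mul_assoc, single_mul_single, mul_one]

theorem mul_conjSum_comm {y : MonoidAlgebra k G} (hy : y ∈ groupSubalgebra k H)
    (x : MonoidAlgebra k G) : y * conjSum k H x = conjSum k H x * y := by
  rw [← sum_coeff_smul_single hy, Finset.sum_mul, Finset.mul_sum]
  exact Finset.sum_congr rfl fun h _ => by
    rw [smul_mul_assoc, single_mul_conjSum h.2, mul_smul_comm]

theorem map_conjSum_single {t : G → G} (ht : ∀ g h, t (g * h) = t h * t g)
    (htinv : Function.Involutive t) (htH : ∀ h ∈ H, t h ∈ H) (g : G) :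
    mapDomainLinearMap k k t (conjSum k H (single g 1)) = conjSum k H (single (t g) 1) := by
  have ht1 : t 1 = 1 := left_eq_mul.1 ((congrArg t (mul_one 1)).symm.trans (ht 1 1))
  have htinv' (h : G) : t h⁻¹ = (t h)⁻¹ := by
    rw [eq_inv_iff_mul_eq_one, ← ht, mul_inv_cancel, ht1]
  let τ : H ≃ H := Function.Involutive.toPerm (fun h => ⟨t h⁻¹, htH _ (inv_mem h.2)⟩) fun h =>
    Subtype.ext (by simp only [htinv', inv_inv, htinv h.1])
  have hτ (h : H) : (τ h : G) = (t h)⁻¹ := htinv' h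
  rw [conjSum_single, conjSum_single, map_sum,
    ← Equiv.sum_comp τ fun h : H => single ((h : G) * t g * (h : G)⁻¹) (1 : k)]
  simp only [mapDomainLinearMap_single, ht, htinv', hτ, inv_inv, mul_assoc]

theorem map_conjSum {t : G → G} (ht : ∀ g h, t (g * h) = t h * t g)
    (htinv : Function.Involutive t) (htH : ∀ h ∈ H, t h ∈ H) {K : Subgroup G} [Finite K]
    (hconj : ∀ g ∈ K, ∃ h ∈ H, h * g * h⁻¹ = t g) {x : MonoidAlgebra k G}
    (hx : x ∈ groupSubalgebra k K) :
    mapDomainLinearMap k k t (conjSum k H x) = conjSum k H x := by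
  have := Fintype.ofFinite K
  rw [← sum_coeff_smul_single hx]
  simp only [map_sum, map_smul]
  refine Finset.sum_congr rfl fun g _ => ?_
  obtain ⟨h, hh, hhg⟩ := hconj g g.2
  rw [map_conjSum_single ht htinv htH, ← hhg, conjSum_single_conj _ hh]

theorem coeff_one_mul_comm (x y : MonoidAlgebra k G) : (x * y).coeff 1 = (y * x).coeff 1 := by
  classical
  rw [coeff_mul_apply_left, coeff_mul_apply_right]
  exact Finsupp.sum_congr fun a _ => by rw [mul_one, one_mul, mul_comm]

/-- As `e * kH * e` is one-dimensional, `e.coeff 1 • (e * h⁻¹ * e) = e.coeff h • e` for `h ∈ H`. -/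
theorem coeff_one_smul_conjSum_mul {e x : MonoidAlgebra k G} (heH : e ∈ groupSubalgebra k H)
    (he : IsIdempotentElem e) (hcorner : ∀ y ∈ groupSubalgebra k H, ∃ c : k, e * y * e = c • e)
    (hxe : x * e = x) (hex : e * x = x) : e.coeff 1 • (conjSum k H x * e) = x := by
  have key (h : H) :
      e.coeff 1 • (e * single (h : G)⁻¹ 1 * e) = e.coeff h • e := by
    obtain ⟨c, hc⟩ := hcorner _ (single_mem_groupSubalgebra (inv_mem h.2) 1)
    have hcoeff : (e * single (h : G)⁻¹ 1 * e).coeff 1 = e.coeff h := by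
      rw [mul_assoc, coeff_one_mul_comm, mul_assoc, he.eq, coeff_single_mul_apply, inv_inv,
        mul_one, one_mul]
    rw [← hcoeff, hc, coeff_smul, smul_smul, Finsupp.smul_apply, smul_eq_mul, mul_comm]
  have hterm (h : H) : e.coeff 1 • (single (h : G) 1 * x * single (h : G)⁻¹ 1 * e) =
      e.coeff h • single (h : G) 1 * x := by
    calc e.coeff 1 • (single (h : G) 1 * x * single (h : G)⁻¹ 1 * e)
        = single (h : G) 1 * x * (e.coeff 1 • (e * single (h : G)⁻¹ 1 * e)) := by
          rw [mul_smul_comm, ← mul_assoc, ← mul_assoc, mul_assoc _ x e, hxe]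
      _ = e.coeff h • single (h : G) 1 * x := by
          rw [key, mul_smul_comm, mul_assoc, hxe, smul_mul_assoc]
  rw [conjSum_apply, Finset.sum_mul, Finset.smul_sum, Finset.sum_congr rfl fun h _ => hterm h,
    ← Finset.sum_mul, sum_coeff_smul_single heH, hex]

end ConjSum

theorem IsTransposeSplitting.exists_groupSubalgebra_of_conj {k G : Type u} [Field k]
    [IsAlgClosed k] [Group G] [Finite G] {t : G → G} (ht : ∀ g h, t (g * h) = t h * t g)
    (htinv : Function.Involutive t) {H K : Subgroup G} [NeZero (Nat.card K : k)] (hHK : H ≤ K)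
    (htH : ∀ h ∈ H, t h ∈ H) (hconj : ∀ g ∈ K, ∃ h ∈ H, h * g * h⁻¹ = t g)
    {ι : Type*} [Fintype ι] {e : ι → MonoidAlgebra k G}
    (he : IsTransposeSplitting (mapDomainLinearMap k k t) (groupSubalgebra k H) e) :
    ∃ (κ : Type u) (_ : Fintype κ) (f : κ → MonoidAlgebra k G),
      IsTransposeSplitting (mapDomainLinearMap k k t) (groupSubalgebra k K) f := by
  have := Fintype.ofFinite H
  have := isSemisimpleRing_groupSubalgebra (k := k) K
  have hmono : groupSubalgebra k H ≤ groupSubalgebra k K := groupSubalgebra_mono hHK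
  have hTmul := mapDomainLinearMap_mul (k := k) ht
  refine he.exists_of_le hTmul hmono fun a x hx => ?_
  have hxK : e a * x * e a ∈ groupSubalgebra k K :=
    mul_mem (mul_mem (hmono (he.mem a)) hx) (hmono (he.mem a))
  have hxe : e a * x * e a * e a = e a * x * e a := by rw [mul_assoc, (he.idem a).eq]
  have hex : e a * (e a * x * e a) = e a * x * e a := by
    rw [← mul_assoc, ← mul_assoc, (he.idem a).eq]
  rw [← coeff_one_smul_conjSum_mul (he.mem a) (he.idem a) (he.corner a) hxe hex, map_smul, hTmul,
    he.map_eq, map_conjSum ht htinv htH hconj hxK, mul_conjSum_comm (he.mem a)]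

end GroupAlgebra

section Trace

variable {k : Type*} [Field k] {A : Type*} [Ring A] [Algebra k A] {ι : Type*} [Fintype ι]

theorem trace_eq_sum_trace_corner {e : ι → A} (he : CompleteOrthogonalIdempotents e)
    (f : Module.End k A) :
    LinearMap.trace k A f = ∑ a, ∑ b, LinearMap.trace k A
      (LinearMap.mulLeftRight k (e a, e b) * f * LinearMap.mulLeftRight k (e a, e b)) := by
  have hidem (a b : ι) : LinearMap.mulLeftRight k (e a, e b) * LinearMap.mulLeftRight k (e a, e b) =
      LinearMap.mulLeftRight k (e a, e b) := LinearMap.ext fun x => by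
    simp only [Module.End.mul_apply, LinearMap.mulLeftRight_apply]
    rw [← mul_assoc, ← mul_assoc, (he.idem a).eq, mul_assoc _ (e b), (he.idem b).eq]
  have hsum : ∑ a, ∑ b, LinearMap.mulLeftRight k (e a, e b) = (1 : Module.End k A) :=
    LinearMap.ext fun x => by
      simp only [LinearMap.sum_apply, LinearMap.mulLeftRight_apply, ← Finset.mul_sum, he.complete,
        mul_one, ← Finset.sum_mul, one_mul, Module.End.one_apply]
  calc LinearMap.trace k A f
      = ∑ a, ∑ b, LinearMap.trace k A (LinearMap.mulLeftRight k (e a, e b) * f) := by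
        simp only [← map_sum, ← Finset.sum_mul, hsum, one_mul]
    _ = _ := by
        refine Finset.sum_congr rfl fun a _ => Finset.sum_congr rfl fun b _ => ?_
        rw [LinearMap.trace_mul_comm _ _ (LinearMap.mulLeftRight k (e a, e b)), ← mul_assoc, hidem]

theorem trace_mulLeftRight_self_eq_one [Module.Finite k A] {e : A} (he : IsIdempotentElem e)
    (he0 : e ≠ 0) (hcorner : ∀ x, ∃ c : k, e * x * e = c • e) :
    LinearMap.trace k A (LinearMap.mulLeftRight k (e, e)) = 1 := by
  obtain ⟨φ, hφ⟩ := Module.Projective.exists_dual_eq_one k he0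
  have hrank : LinearMap.mulLeftRight k (e, e) =
      (φ ∘ₗ LinearMap.mulLeftRight k (e, e)).smulRight e := LinearMap.ext fun x => by
    obtain ⟨c, hc⟩ := hcorner x
    simp only [LinearMap.smulRight_apply, LinearMap.comp_apply, LinearMap.mulLeftRight_apply, hc,
      map_smul, hφ, smul_eq_mul, mul_one]
  rw [hrank, LinearMap.trace_smulRight, LinearMap.comp_apply, LinearMap.mulLeftRight_apply,
    he.eq, he.eq, hφ]

/-- Only the diagonal corners contribute, and `x * T ·` acts on the line `e a * A * e a` by
`μ a`. -/
theorem IsTransposeSplitting.trace_mulLeft_comp [Module.Finite k A] {T : A →ₗ[k] A}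
    (hT : ∀ x y, T (x * y) = T y * T x) {e : ι → A} (he : IsTransposeSplitting T ⊤ e) {x : A}
    {μ : ι → k} (hμ : ∀ a, e a * x * e a = μ a • e a) :
    LinearMap.trace k A (LinearMap.mulLeft k x ∘ₗ T) = ∑ a, μ a := by
  classical
  have hoff (a b : ι) (hab : a ≠ b) : LinearMap.mulLeftRight k (e a, e b) *
      (LinearMap.mulLeft k x ∘ₗ T) * LinearMap.mulLeftRight k (e a, e b) = 0 :=
    LinearMap.ext fun y => by
      simp only [Module.End.mul_apply, LinearMap.comp_apply, LinearMap.mulLeftRight_apply,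
        LinearMap.mulLeft_apply, LinearMap.zero_apply, hT, he.map_eq, mul_assoc, he.ortho hab,
        mul_zero]
  have hdiag (a : ι) : LinearMap.mulLeftRight k (e a, e a) * (LinearMap.mulLeft k x ∘ₗ T) *
      LinearMap.mulLeftRight k (e a, e a) = μ a • LinearMap.mulLeftRight k (e a, e a) :=
    LinearMap.ext fun y => by
      obtain ⟨c, hc⟩ := he.corner a y trivial
      simp only [Module.End.mul_apply, LinearMap.comp_apply, LinearMap.mulLeftRight_apply,
        LinearMap.mulLeft_apply, LinearMap.smul_apply, hc, map_smul, he.map_eq]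
      rw [← mul_assoc, hμ, smul_mul_assoc, (he.idem a).eq, smul_comm]
  rw [trace_eq_sum_trace_corner he.toCompleteOrthogonalIdempotents]
  refine Finset.sum_congr rfl fun a _ => ?_
  rw [Finset.sum_eq_single a (fun b _ hba => by rw [hoff a b hba.symm, map_zero])
    fun ha => absurd (Finset.mem_univ a) ha, hdiag, map_smul,
    trace_mulLeftRight_self_eq_one (he.idem a) (he.ne_zero a) fun y => he.corner a y trivial,
    smul_eq_mul, mul_one]

theorem trace_apply_eq_sum_of_corner {e : ι → A} (he : CompleteOrthogonalIdempotents e) {x : A}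
    {μ : ι → k} (hμ : ∀ a, e a * x * e a = μ a • e a) {W : Type*} [AddCommGroup W] [Module k W]
    (ρ : A →ₐ[k] Module.End k W) :
    LinearMap.trace k W (ρ x) = ∑ a, μ a * LinearMap.trace k W (ρ (e a)) := by
  have hterm (a : ι) :
      LinearMap.trace k W (ρ (x * e a)) = μ a * LinearMap.trace k W (ρ (e a)) := by
    calc LinearMap.trace k W (ρ (x * e a))
        = LinearMap.trace k W (ρ (x * e a) * ρ (e a)) := by
          rw [← map_mul, mul_assoc, (he.idem a).eq]
      _ = LinearMap.trace k W (ρ (e a * x * e a)) := by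
          rw [LinearMap.trace_mul_comm, ← map_mul, mul_assoc]
      _ = μ a * LinearMap.trace k W (ρ (e a)) := by rw [hμ, map_smul, map_smul, smul_eq_mul]
  rw [← Finset.sum_congr rfl fun a _ => hterm a, ← map_sum, ← map_sum, ← Finset.mul_sum,
    he.complete, mul_one]

theorem trace_lsmul_span_singleton [Module.Finite k A] {e : A} (he : IsIdempotentElem e) (x : A) :
    LinearMap.trace k (Ideal.span {e}) (Algebra.lsmul k k (Ideal.span {e}) x) =
      LinearMap.trace k A (LinearMap.mulLeftRight k (x, e)) := by
  have hmem (y : A) :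
      LinearMap.mulLeftRight k (x, e) y ∈ (Ideal.span {e}).restrictScalars k :=
    Ideal.mem_span_singleton'.2 ⟨x * y, rfl⟩
  rw [← LinearMap.trace_restrict_eq_of_forall_mem _ _ hmem]
  congr 1
  refine LinearMap.ext fun y => Subtype.ext ?_
  obtain ⟨z, hz⟩ := Ideal.mem_span_singleton'.1 y.2
  have hye : (y : A) * e = y := by rw [← hz, mul_assoc, he.eq]
  exact (congrArg (x * ·) hye.symm).trans (mul_assoc _ _ _).symm

theorem trace_eq_sum_coeff {G : Type*} [Fintype G] (f : Module.End k (MonoidAlgebra k G)) :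
    LinearMap.trace k _ f = ∑ g, (f (MonoidAlgebra.single g 1)).coeff g := by
  classical
  rw [LinearMap.trace_eq_matrix_trace k (MonoidAlgebra.basis G k), Matrix.trace]
  refine Finset.sum_congr rfl fun g _ => ?_
  rw [Matrix.diag_apply, LinearMap.toMatrix_apply, MonoidAlgebra.basis_apply]
  rfl

end Trace

section Characters

variable {k G : Type u} [Field k] [Group G]

/-- The representation of `G` on the left ideal of its group algebra generated by `e`. -/
noncomputable def leftIdealRep [Finite G] (e : MonoidAlgebra k G) : FDRep k G :=
  FDRep.of (Representation.ofModule' (k := k) (G := G) (Ideal.span {e}))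

theorem asAlgebraHom_leftIdealRep [Finite G] (e : MonoidAlgebra k G) :
    Representation.asAlgebraHom (leftIdealRep e).ρ = Algebra.lsmul k k (Ideal.span {e}) :=
  MonoidAlgebra.algHom_ext
    (fun g => Representation.asAlgebraHom_single_one (leftIdealRep e).ρ g)
    (Subsingleton.elim _ _)

theorem character_eq_trace_asAlgebraHom (V : FDRep k G) (g : G) :
    V.character g =
      LinearMap.trace k _ (Representation.asAlgebraHom V.ρ (MonoidAlgebra.single g 1)) := by
  rw [Representation.asAlgebraHom_single_one]; rfl

theorem trace_asAlgebraHom [Fintype G] (V : FDRep k G) (x : MonoidAlgebra k G) :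
    LinearMap.trace k _ (Representation.asAlgebraHom V.ρ x) = ∑ g, x.coeff g * V.character g := by
  conv_lhs => rw [← MonoidAlgebra.sum_coeff_single x, Finsupp.sum_fintype _ _ fun g => by simp]
  simp only [map_sum, Representation.asAlgebraHom_single, map_smul, smul_eq_mul]
  rfl

theorem character_leftIdealRep [Fintype G] {e : MonoidAlgebra k G} (he : IsIdempotentElem e)
    (g : G) : (leftIdealRep e).character g = ∑ h, e.coeff (h⁻¹ * g⁻¹ * h) := by
  classical
  rw [character_eq_trace_asAlgebraHom, asAlgebraHom_leftIdealRep]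
  refine (trace_lsmul_span_singleton he _).trans ?_
  rw [trace_eq_sum_coeff]
  refine Finset.sum_congr rfl fun h _ => ?_
  rw [LinearMap.mulLeftRight_apply, MonoidAlgebra.single_mul_single,
    MonoidAlgebra.coeff_single_mul_apply, mul_one, one_mul, mul_inv_rev, mul_assoc]

theorem finrank_leftIdealRep_hom [Finite G] [NeZero (Nat.card G : k)] {e : MonoidAlgebra k G}
    (he : IsIdempotentElem e) (V : FDRep k G) :
    (Module.finrank k (leftIdealRep e ⟶ V) : k) =
      LinearMap.trace k _ (Representation.asAlgebraHom V.ρ e) := by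
  classical
  have := Fintype.ofFinite G
  let _ : Invertible (Nat.card G : k) := invertibleOfNonzero (NeZero.ne _)
  have hconj (h : G) :
      ∑ g, V.character g * e.coeff (h⁻¹ * g * h) = ∑ g, e.coeff g * V.character g :=
    Fintype.sum_equiv (MulAut.conj h⁻¹).toEquiv _ _ fun g => by
      rw [MulEquiv.toEquiv_eq_coe, MulEquiv.coe_toEquiv, MulAut.conj_apply, FDRep.char_conj,
        inv_inv, mul_comm]
  rw [← FDRep.scalar_product_char_eq_finrank_equivariant, trace_asAlgebraHom]
  simp only [character_leftIdealRep he, inv_inv, Finset.mul_sum]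
  rw [Finset.sum_comm]
  simp only [← Finset.mul_sum, hconj]
  rw [Finset.sum_const, nsmul_eq_mul, Finset.card_univ, ← Nat.card_eq_fintype_card, ← mul_assoc,
    inv_mul_cancel₀ (NeZero.ne _), one_mul]

theorem simple_leftIdealRep [IsAlgClosed k] [CharZero k] [Finite G] {e : MonoidAlgebra k G}
    (he : IsIdempotentElem e) (he0 : e ≠ 0) (hcorner : ∀ x, ∃ c : k, e * x * e = c • e) :
    Simple (leftIdealRep e) := by
  rw [FDRep.simple_iff_end_is_rank_one, ← Nat.cast_inj (R := k), finrank_leftIdealRep_hom he,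
    asAlgebraHom_leftIdealRep, Nat.cast_one]
  exact (trace_lsmul_span_singleton he e).trans (trace_mulLeftRight_self_eq_one he he0 hcorner)

end Characters

section ComplexCharacters

variable {G : Type} [Group G] {ι : Type} [Fintype ι] {V : ι → FDRep ℂ G}

theorem sum_trace_asAlgebraHom_eq_one [Finite G] (hV : IsCompleteIrrFamily V)
    {e : MonoidAlgebra ℂ G} (he : IsIdempotentElem e) (he0 : e ≠ 0)
    (hcorner : ∀ x, ∃ c : ℂ, e * x * e = c • e) :
    ∑ i, LinearMap.trace ℂ _ (Representation.asAlgebraHom (V i).ρ e) = 1 := by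
  classical
  obtain ⟨hsimple, hdistinct, hcomplete⟩ := hV
  have := simple_leftIdealRep he he0 hcorner
  obtain ⟨i, ⟨φ⟩⟩ := hcomplete (leftIdealRep e) this
  have hhom (j : ι) : Module.finrank ℂ (leftIdealRep e ⟶ V j) = if i = j then 1 else 0 := by
    rw [FDRep.finrank_hom_simple_simple]
    refine if_congr ⟨fun ⟨ψ⟩ => hdistinct i j ⟨φ ≪≫ ψ⟩, ?_⟩ rfl rfl
    rintro rfl
    exact ⟨φ.symm⟩
  simp only [← finrank_leftIdealRep_hom he, hhom, Nat.cast_ite, Nat.cast_one, Nat.cast_zero,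
    Finset.sum_ite_eq, Finset.mem_univ, if_true]

theorem sum_character_eq_card [Fintype G] [DecidableEq G] (hV : IsCompleteIrrFamily V) {t : G → G}
    (ht : ∀ g h, t (g * h) = t h * t g) {κ : Type*} [Fintype κ] {e : κ → MonoidAlgebra ℂ G}
    (he : IsTransposeSplitting (MonoidAlgebra.mapDomainLinearMap ℂ ℂ t) ⊤ e) (π : G) :
    ∑ i, (V i).character π = #{x | π * t x = x} := by
  choose μ hμ using fun a => he.corner a (MonoidAlgebra.single π 1) trivial
  have hcard : LinearMap.trace ℂ _ (LinearMap.mulLeft ℂ (MonoidAlgebra.single π (1 : ℂ)) ∘ₗ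
      MonoidAlgebra.mapDomainLinearMap ℂ ℂ t) = #{x | π * t x = x} := by
    rw [trace_eq_sum_coeff, Finset.card_filter, Nat.cast_sum]
    refine Finset.sum_congr rfl fun g _ => ?_
    rw [LinearMap.comp_apply, MonoidAlgebra.mapDomainLinearMap_single, LinearMap.mulLeft_apply,
      MonoidAlgebra.single_mul_single, mul_one, MonoidAlgebra.coeff_single,
      Finsupp.single_apply, Nat.cast_ite, Nat.cast_one, Nat.cast_zero]
  calc ∑ i, (V i).character π
      = ∑ i, ∑ a, μ a * LinearMap.trace ℂ _ (Representation.asAlgebraHom (V i).ρ (e a)) := by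
        simp only [character_eq_trace_asAlgebraHom]
        exact Finset.sum_congr rfl fun i _ =>
          trace_apply_eq_sum_of_corner he.toCompleteOrthogonalIdempotents hμ _
    _ = ∑ a, μ a := by
        rw [Finset.sum_comm]
        refine Finset.sum_congr rfl fun a _ => ?_
        rw [← Finset.mul_sum, sum_trace_asAlgebraHom_eq_one hV (he.idem a) (he.ne_zero a)
          fun x => he.corner a x trivial, mul_one]
    _ = #{x | π * t x = x} := by
        rw [← he.trace_mulLeft_comp (mapDomainLinearMap_mul ht) hμ, hcard]

end ComplexCharacters

section Cycles

theorem zpow_neg_apply_eq {X : Type*} {σ : Equiv.Perm X} {k l : ℤ} {b : X}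
    (h : (σ ^ k) b = (σ ^ l) b) : (σ ^ (-k)) b = (σ ^ (-l)) b := by
  refine (σ ^ (k + l)).injective ?_
  rw [← Equiv.Perm.mul_apply, ← Equiv.Perm.mul_apply, ← zpow_add, ← zpow_add,
    add_neg_cancel_comm, add_neg_cancel_right, h]

variable {X : Type*} [Fintype X] [LinearOrder X]

open Classical in
/-- The largest element of the cycle of `σ` through `x`, used as a canonical representative
of that cycle. -/
noncomputable def cycleMax (σ : Equiv.Perm X) (x : X) : X :=
  (univ.filter (σ.SameCycle x)).max'
    ⟨x, mem_filter.2 ⟨mem_univ x, Equiv.Perm.SameCycle.refl σ x⟩⟩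

theorem sameCycle_cycleMax (σ : Equiv.Perm X) (x : X) : σ.SameCycle x (cycleMax σ x) := by
  classical exact (mem_filter.1 (max'_mem (univ.filter (σ.SameCycle x)) _)).2

theorem cycleMax_eq_iff {σ : Equiv.Perm X} {x y : X} :
    cycleMax σ x = cycleMax σ y ↔ σ.SameCycle x y := by
  classical
  refine ⟨fun h => (sameCycle_cycleMax σ x).trans (h ▸ (sameCycle_cycleMax σ y).symm), fun h => ?_⟩
  have hfilter : univ.filter (σ.SameCycle x) = univ.filter (σ.SameCycle y) :=
    filter_congr fun z _ => ⟨h.symm.trans, h.trans⟩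
  simp only [cycleMax, hfilter]

theorem cycleMax_eq_self {σ : Equiv.Perm X} {x : X} (h : ∀ y, x < y → σ y = y) :
    cycleMax σ x = x := by
  classical
  have hle : x ≤ cycleMax σ x :=
    le_max' _ _ (mem_filter.2 ⟨mem_univ x, Equiv.Perm.SameCycle.refl σ x⟩)
  by_contra hne
  exact hne ((sameCycle_cycleMax σ x).symm.eq_of_left (h _ (hle.lt_of_ne' hne)))

end Cycles

section WreathTranspose

variable {r n : ℕ}

theorem mul_fst (v w : Wreath r n) : (v * w).1 = v.1 * w.1 := rfl

theorem mul_snd (v w : Wreath r n) (i : Fin n) : (v * w).2 i = v.2 (w.1 i) + w.2 i := rfl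

theorem tr_fst (v : Wreath r n) : (Wreath.tr v).1 = v.1⁻¹ := rfl

theorem tr_snd (v : Wreath r n) (i : Fin n) : (Wreath.tr v).2 i = v.2 (v.1⁻¹ i) := neg_neg _

theorem tr_mul (v w : Wreath r n) : Wreath.tr (v * w) = Wreath.tr w * Wreath.tr v := by
  simp only [Wreath.tr, Wreath.bar_mul, mul_inv_rev]

theorem tr_involutive : Function.Involutive (Wreath.tr : Wreath r n → Wreath r n) := fun v => by
  rw [Wreath.tr, Wreath.tr, Wreath.bar_inv, Wreath.bar_bar, inv_inv]

theorem zpow_fst (v : Wreath r n) (m : ℤ) : (v ^ m).1 = v.1 ^ m :=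
  map_zpow (MonoidHom.mk' (fun w : Wreath r n => w.1) fun _ _ => rfl) v m

theorem tr_zpow (v : Wreath r n) (m : ℤ) : Wreath.tr v ^ m = Wreath.tr (v ^ m) := by
  have hbar : Wreath.bar (v ^ m) = Wreath.bar v ^ m := map_zpow Wreath.barAut v m
  rw [Wreath.tr, Wreath.tr, hbar, inv_zpow]

theorem tr_zpow_sub_zpow_eq {g : Wreath r n} {b : Fin n} {k m : ℤ}
    (h : (g.1 ^ k) b = (g.1 ^ m) b) :
    (Wreath.tr g ^ k).2 b - (g ^ k).2 b = (Wreath.tr g ^ m).2 b - (g ^ m).2 b := by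
  obtain ⟨p, rfl⟩ : ∃ p, k = m + p := ⟨k - m, by ring⟩
  have hfix : (g.1 ^ p) b = b := by
    rw [zpow_add, Equiv.Perm.mul_apply] at h
    exact (g.1 ^ m).injective h
  have hfix_inv : (g.1 ^ p)⁻¹ b = b := Equiv.Perm.inv_eq_iff_eq.2 hfix.symm
  have htr : (Wreath.tr g ^ p).1 b = b := by rw [tr_zpow, tr_fst, zpow_fst, hfix_inv]
  have hstab : (Wreath.tr g ^ p).2 b = (g ^ p).2 b := by rw [tr_zpow, tr_snd, zpow_fst, hfix_inv]
  rw [zpow_add, zpow_add, mul_snd, mul_snd, htr, zpow_fst g p, hfix, hstab]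
  ring

/-- With `b` the representative of the cycle of `i = σ^m b`, the conjugator reflects the cycle,
`σ^m b ↦ σ^(-m) b`, and its colour at `i` compares the colours of `(tr g)^m` and `g^m` at `b`. -/
theorem exists_mul_mul_inv_eq_tr (g : Wreath r n) :
    ∃ h : Wreath r n, h * g * h⁻¹ = Wreath.tr g ∧
      ∀ i, cycleMax g.1 i = i → h.1 i = i ∧ h.2 i = 0 := by
  choose m hm using fun i => (sameCycle_cycleMax g.1 i).symm
  have hroot (i : Fin n) (k : ℤ) :
      cycleMax g.1 ((g.1 ^ k) (cycleMax g.1 i)) = cycleMax g.1 i :=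
    cycleMax_eq_iff.2 ((sameCycle_cycleMax g.1 i).trans ⟨k, rfl⟩).symm
  let τ (i : Fin n) : Fin n := (g.1 ^ (-m i)) (cycleMax g.1 i)
  have hτ : Function.Involutive τ := fun i => by
    have hτi := hm (τ i)
    rw [hroot] at hτi
    calc τ (τ i) = (g.1 ^ (-m (τ i))) (cycleMax g.1 i) := by simp only [τ, hroot]
      _ = (g.1 ^ (-(-m i))) (cycleMax g.1 i) := zpow_neg_apply_eq hτi
      _ = i := by rw [neg_neg, hm]
  have hmσ (i : Fin n) : cycleMax g.1 (g.1 i) = cycleMax g.1 i ∧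
      (g.1 ^ m (g.1 i)) (cycleMax g.1 i) = (g.1 ^ (1 + m i)) (cycleMax g.1 i) := by
    have hcyc : cycleMax g.1 (g.1 i) = cycleMax g.1 i := cycleMax_eq_iff.2 ⟨-1, by simp⟩
    exact ⟨hcyc, by rw [← hcyc, hm, hcyc, zpow_one_add, Equiv.Perm.mul_apply, hm]⟩
  let h : Wreath r n := ⟨hτ.toPerm, fun i =>
    (Wreath.tr g ^ m i).2 (cycleMax g.1 i) - (g ^ m i).2 (cycleMax g.1 i)⟩
  refine ⟨h, ?_, fun i hi => ?_⟩
  · rw [mul_inv_eq_iff_eq_mul]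
    refine Prod.ext (Equiv.ext fun i => ?_) (funext fun i => ?_)
    · change τ (g.1 i) = g.1⁻¹ (τ i)
      simp only [τ, (hmσ i).1, zpow_neg_apply_eq (hmσ i).2, neg_add, zpow_add, zpow_neg_one,
        Equiv.Perm.mul_apply]
    · change _ - _ + g.2 i = (Wreath.tr g).2 (τ i) + (_ - _)
      rw [(hmσ i).1, tr_zpow_sub_zpow_eq (hmσ i).2, zpow_one_add, zpow_one_add, mul_snd,
        mul_snd, zpow_fst g, hm, tr_zpow g (m i), tr_fst (g ^ m i), zpow_fst, ← zpow_neg]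
      ring
  · have hmi : (g.1 ^ m i) i = (g.1 ^ (0 : ℤ)) i := by
      simpa only [hi, zpow_zero, Equiv.Perm.one_apply] using hm i
    refine ⟨?_, ?_⟩
    · change (g.1 ^ (-m i)) (cycleMax g.1 i) = i
      rw [hi, zpow_neg_apply_eq hmi, neg_zero, zpow_zero, Equiv.Perm.one_apply]
    · change (Wreath.tr g ^ m i).2 (cycleMax g.1 i) - (g ^ m i).2 (cycleMax g.1 i) = 0
      rw [hi, tr_zpow_sub_zpow_eq hmi, zpow_zero, zpow_zero, sub_self]

/-- The copy of `ℤ_r ≀ S_k` in `ℤ_r ≀ S_n` acting on the first `k` indices. -/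
def firstIndices (r n k : ℕ) : Subgroup (Wreath r n) where
  carrier := {g | ∀ i : Fin n, k ≤ i → g.1 i = i ∧ g.2 i = 0}
  mul_mem' {a b} ha hb i hi := by
    refine ⟨?_, ?_⟩
    · rw [mul_fst, Equiv.Perm.mul_apply, (hb i hi).1, (ha i hi).1]
    · rw [mul_snd, (hb i hi).1, (ha i hi).2, (hb i hi).2, add_zero]
  one_mem' _ _ := ⟨rfl, rfl⟩
  inv_mem' {a} ha i hi := by
    have hinv : a.1⁻¹ i = i := Equiv.Perm.inv_eq_iff_eq.2 (ha i hi).1.symm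
    refine ⟨hinv, ?_⟩
    change -a.2 (a.1⁻¹ i) = 0
    rw [hinv, (ha i hi).2, neg_zero]

theorem firstIndices_mono {k l : ℕ} (h : k ≤ l) : firstIndices r n k ≤ firstIndices r n l :=
  fun _ hg i hi => hg i (h.trans hi)

theorem firstIndices_zero : firstIndices r n 0 = ⊥ :=
  (Subgroup.eq_bot_iff_forall _).2 fun _ hg =>
    Prod.ext (Equiv.ext fun i => (hg i i.val.zero_le).1) (funext fun i => (hg i i.val.zero_le).2)

theorem firstIndices_self : firstIndices r n n = ⊤ :=
  eq_top_iff.2 fun _ _ i hi => absurd i.isLt hi.not_gt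

theorem tr_mem_firstIndices {k : ℕ} {g : Wreath r n} (hg : g ∈ firstIndices r n k) :
    Wreath.tr g ∈ firstIndices r n k := fun i hi => by
  have hinv : g.1⁻¹ i = i := Equiv.Perm.inv_eq_iff_eq.2 (hg i hi).1.symm
  exact ⟨hinv, by rw [tr_snd, hinv, (hg i hi).2]⟩

theorem exists_conj_eq_tr_of_mem_firstIndices_succ {k : ℕ} {g : Wreath r n}
    (hg : g ∈ firstIndices r n (k + 1)) :
    ∃ h ∈ firstIndices r n k, h * g * h⁻¹ = Wreath.tr g := by
  obtain ⟨h, hconj, hfix⟩ := exists_mul_mul_inv_eq_tr g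
  exact ⟨h, fun i hi => hfix i (cycleMax_eq_self fun j hij =>
    (hg j (hi.trans_lt (Fin.lt_def.1 hij))).1), hconj⟩

theorem exists_isTransposeSplitting_firstIndices [NeZero r] (k : ℕ) :
    ∃ (κ : Type) (_ : Fintype κ) (e : κ → MonoidAlgebra ℂ (Wreath r n)),
      IsTransposeSplitting (MonoidAlgebra.mapDomainLinearMap ℂ ℂ Wreath.tr)
        (groupSubalgebra ℂ (firstIndices r n k)) e := by
  induction k with
  | zero =>
    have htr_one : Wreath.tr (1 : Wreath r n) = 1 := by
      simpa only [Subgroup.mem_bot, firstIndices_zero] using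
        tr_mem_firstIndices (one_mem (firstIndices r n 0))
    rw [firstIndices_zero, groupSubalgebra_bot]
    exact ⟨Unit, inferInstance, _, isTransposeSplitting_bot (by
      rw [MonoidAlgebra.one_def, MonoidAlgebra.mapDomainLinearMap_single, htr_one])⟩
  | succ k ih =>
    obtain ⟨κ, _, e, he⟩ := ih
    exact he.exists_groupSubalgebra_of_conj tr_mul tr_involutive
      (firstIndices_mono k.le_succ) (fun _ => tr_mem_firstIndices)
      fun _ => exists_conj_eq_tr_of_mem_firstIndices_succ

theorem sum_character_eq_card_mul_tr_eq [NeZero r] {ι : Type} [Fintype ι]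
    {V : ι → FDRep ℂ (Wreath r n)} (hV : IsCompleteIrrFamily V) (π : Wreath r n) :
    ∑ i, (V i).character π = #{x | π * Wreath.tr x = x} := by
  obtain ⟨κ, _, e, he⟩ := exists_isTransposeSplitting_firstIndices (r := r) (n := n) n
  rw [firstIndices_self, groupSubalgebra_top] at he
  exact sum_character_eq_card hV tr_mul he π

end WreathTranspose

section SignOnSupport

theorem sign_eq_one_of_commute {X : Type*} [Fintype X] [DecidableEq X] {σ u : Equiv.Perm X}
    (hcomm : Commute σ u) (hu : u * u = 1) {A : Set X} (hA : ∀ x, σ x ∈ A ↔ x ∈ A)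
    (hdisj : ∀ x ∈ A, u x ∉ A) (hsupp : ∀ x, σ x ≠ x → x ∈ A ∨ u x ∈ A) :
    Equiv.Perm.sign σ = 1 := by
  classical
  have huu (x : X) : u (u x) = x := Equiv.congr_fun hu x
  set σA : Equiv.Perm X := Equiv.Perm.ofSubtype (σ.subtypePerm hA) with hσA
  have hmem {x : X} (hx : x ∈ A) : σA x = σ x := by
    rw [hσA, Equiv.Perm.ofSubtype_apply_of_mem _ hx, Equiv.Perm.subtypePerm_apply]
  have hnotMem {x : X} (hx : x ∉ A) : σA x = x := Equiv.Perm.ofSubtype_apply_of_not_mem _ hx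
  have hfactor : σ = σA * (u * σA * u⁻¹) := by
    rw [inv_eq_of_mul_eq_one_left hu]
    refine Equiv.ext fun x => ?_
    simp only [Equiv.Perm.mul_apply]
    by_cases hx : x ∈ A
    · rw [hnotMem (hdisj x hx), huu, hmem hx]
    · by_cases hux : u x ∈ A
      · have hσx : u (σ (u x)) = σ x := by
          rw [← Equiv.Perm.mul_apply, ← hcomm.eq, Equiv.Perm.mul_apply, huu]
        rw [hmem hux, hσx, hnotMem (mt (hA x).1 hx)]
      · rw [hnotMem hux, huu, hnotMem hx]
        exact not_not.1 fun hne => (hsupp x hne).elim hx hux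
  rw [hfactor, map_mul, map_mul, map_mul, map_inv, mul_inv_cancel_comm, Int.units_mul_self]

theorem sign_eq_neg_one_pow_card {X : Type*} [Fintype X] [DecidableEq X] {u : Equiv.Perm X}
    (hu : u * u = 1) {A : Finset X} (hA : ∀ x, u x ≠ x ↔ x ∈ A ∨ u x ∈ A)
    (hdisj : ∀ x ∈ A, u x ∉ A) : Equiv.Perm.sign u = (-1) ^ #A := by
  have hsupport : u.support = A ∪ map u.toEmbedding A := by
    ext x
    rw [Equiv.Perm.mem_support, hA, mem_union, mem_map_equiv, ← Equiv.Perm.inv_def,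
      inv_eq_of_mul_eq_one_left hu]
  have hdisjoint : Disjoint A (map u.toEmbedding A) := disjoint_left.2 fun x hx hux => by
    rw [mem_map_equiv, ← Equiv.Perm.inv_def, inv_eq_of_mul_eq_one_left hu] at hux
    exact hdisj x hx hux
  have hcard : u.support.card = 2 * #A := by
    rw [hsupport, card_union_of_disjoint hdisjoint, card_map, two_mul]
  have hfixed : Fintype.card X - Fintype.card (Function.fixedPoints u) = 2 * #A := by
    rw [u.card_fixedPoints, u.sum_cycleType, hcard,
      Nat.sub_sub_self (hcard ▸ card_le_univ u.support)]
  rw [Equiv.Perm.sign_of_pow_two_eq_one (by rw [sq, hu]), hfixed,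
    Nat.mul_div_cancel_left _ two_pos]

variable {n : ℕ} {σ u : Equiv.Perm (Fin n)}

/-- The sign `(-1)^{#(Inv(σ) ∩ Pair(u))}`. -/
def pairSign (σ u : Equiv.Perm (Fin n)) : ℤ := (-1) ^ #(invPairs σ ∩ pairSet u)

theorem card_invPairs_inter_pairSet (hu : u * u = 1) :
    #(invPairs σ ∩ pairSet u) = #{x | x < u x ∧ σ (u x) < σ x} := by
  refine card_nbij' Prod.fst (fun x => (x, u x)) ?_ ?_ ?_ fun _ _ => rfl
  · rintro ⟨x, y⟩ hxy
    obtain ⟨⟨hlt, hinv⟩, -, rfl, -⟩ := by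
      simpa only [invPairs, pairSet, coe_inter, Set.mem_inter_iff, coe_filter, mem_univ,
        true_and, Set.mem_ofPred_eq] using hxy
    simpa only [coe_filter, mem_univ, true_and, Set.mem_ofPred_eq] using ⟨hlt, hinv⟩
  · intro x hx
    obtain ⟨hlt, hinv⟩ := by
      simpa only [coe_filter, mem_univ, true_and, Set.mem_ofPred_eq] using hx
    simpa only [invPairs, pairSet, coe_inter, Set.mem_inter_iff, coe_filter, mem_univ,
      true_and, Set.mem_ofPred_eq] using ⟨⟨hlt, hinv⟩, hlt, Equiv.congr_fun hu x⟩
  · rintro ⟨x, y⟩ hxy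
    obtain ⟨-, -, rfl, -⟩ := by
      simpa only [invPairs, pairSet, coe_inter, Set.mem_inter_iff, coe_filter, mem_univ,
        true_and, Set.mem_ofPred_eq] using hxy
    rfl

/-- The involution exchanging the two points of exactly those 2-cycles of `u` on which `σ` is
decreasing. -/
def invertedSwaps (σ u : Equiv.Perm (Fin n)) (x : Fin n) : Fin n :=
  if u x ≠ x ∧ (x < u x ↔ σ (u x) < σ x) then u x else x

theorem involutive_invertedSwaps (hu : u * u = 1) :
    Function.Involutive (invertedSwaps σ u) := fun x => by
  have huu : u (u x) = x := Equiv.congr_fun hu x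
  have hσ := σ.injective.ne_iff (x := u x) (y := x)
  unfold invertedSwaps
  grind

theorem sign_invertedSwaps (hu : u * u = 1) :
    Equiv.Perm.sign (involutive_invertedSwaps (σ := σ) hu).toPerm =
      (-1) ^ #(invPairs σ ∩ pairSet u) := by
  have huu (x : Fin n) : u (u x) = x := Equiv.congr_fun hu x
  have hσ (x : Fin n) : σ (u x) = σ x ↔ u x = x := σ.injective.eq_iff
  rw [card_invPairs_inter_pairSet hu]
  refine sign_eq_neg_one_pow_card (Equiv.ext fun x => involutive_invertedSwaps hu x)
    (fun x => ?_) fun x hx => ?_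
  · have := hσ x
    simp only [Function.Involutive.coe_toPerm, invertedSwaps, mem_filter, mem_univ, true_and]
    grind
  · have := hσ x
    simp only [Function.Involutive.coe_toPerm, invertedSwaps, mem_filter, mem_univ,
      true_and] at hx ⊢
    grind

/-- Undoing the inversions of `σ` on the 2-cycles of `u` yields a permutation that preserves
`{x | x < u x}`, hence is even. -/
theorem pairSign_eq_sign (hcomm : Commute σ u) (hu : u * u = 1) {ρ : Equiv.Perm (Fin n)}
    (hρ : ∀ x, ρ x = if u x = x then x else σ x) : pairSign σ u = Equiv.Perm.sign ρ := by
  have huu (x : Fin n) : u (u x) = x := Equiv.congr_fun hu x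
  have hσu (x : Fin n) : σ (u x) = u (σ x) := Equiv.congr_fun hcomm.eq x
  let κ := (involutive_invertedSwaps (σ := σ) hu).toPerm
  have hκ (x : Fin n) : κ x = invertedSwaps σ u x := rfl
  have hσ_inj (x : Fin n) : σ (u x) = σ x ↔ u x = x := σ.injective.eq_iff
  have hsign : Equiv.Perm.sign (ρ * κ) = 1 := by
    refine sign_eq_one_of_commute (u := u) (A := {x | x < u x}) (Equiv.ext fun x => ?_) hu
      (fun x => ?_) (fun x hx => ?_) fun x hx => ?_
    · have := hσ_inj x
      simp only [Equiv.Perm.mul_apply, hρ, hκ, invertedSwaps]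
      grind
    · have := hσ_inj x
      simp only [Equiv.Perm.mul_apply, hρ, hκ, invertedSwaps, Set.mem_ofPred_eq]
      grind
    · simpa only [Set.mem_ofPred_eq, huu, not_lt] using le_of_lt hx
    · have hux : u x ≠ x := fun hux => hx (by
        simp only [Equiv.Perm.mul_apply, hρ, hκ, invertedSwaps, hux, ne_eq, not_true_eq_false,
          false_and, if_false, if_true])
      simpa only [Set.mem_ofPred_eq, huu] using lt_or_gt_of_ne hux.symm
  rw [map_mul, sign_invertedSwaps hu, mul_eq_one_iff_eq_inv, Int.units_inv_eq_self] at hsign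
  rw [hsign, pairSign]
  push_cast
  rfl

end SignOnSupport

section PairSignCocycle

variable {n : ℕ} {u : Equiv.Perm (Fin n)}

/-- `-1` when `σ` reverses the order of `x` and `y`, and `1` otherwise. -/
def orderSign (σ : Equiv.Perm (Fin n)) (x y : Fin n) : ℤ := if x < y ↔ σ x < σ y then 1 else -1

theorem orderSign_comm (σ : Equiv.Perm (Fin n)) (x y : Fin n) :
    orderSign σ x y = orderSign σ y x := by
  have hσ : σ x = σ y ↔ x = y := σ.injective.eq_iff
  unfold orderSign
  grind

theorem orderSign_mul (σ τ : Equiv.Perm (Fin n)) (x y : Fin n) :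
    orderSign (σ * τ) x y = orderSign σ (τ x) (τ y) * orderSign τ x y := by
  simp only [orderSign, Equiv.Perm.mul_apply]
  grind

theorem pairSign_eq_prod_orderSign (hu : u * u = 1) (σ : Equiv.Perm (Fin n)) :
    pairSign σ u = ∏ x with x < u x, orderSign σ x (u x) := by
  have hsign (x : Fin n) (hx : x ∈ ({x | x < u x} : Finset (Fin n))) :
      orderSign σ x (u x) = if σ (u x) < σ x then -1 else 1 := by
    have hlt : x < u x := by rwa [mem_filter_univ] at hx
    have hne : σ x ≠ σ (u x) := σ.injective.ne hlt.ne
    unfold orderSign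
    grind
  rw [prod_congr rfl hsign, pairSign, card_invPairs_inter_pairSet hu, prod_ite, prod_const,
    prod_const_one, mul_one, filter_filter]

theorem prod_filter_lt_eq {M : Type*} [CommMonoid M] (hu : u * u = 1) (σ : Equiv.Perm (Fin n))
    {f : Fin n → M} (hf : ∀ x, f (u x) = f x) :
    ∏ x with x < u x, f x = ∏ x with σ x < σ (u x), f x := by
  have huu (x : Fin n) : u (u x) = x := Equiv.congr_fun hu x
  have hσ (x : Fin n) : σ (u x) = σ x ↔ u x = x := σ.injective.eq_iff
  refine prod_nbij' (fun x => if σ x < σ (u x) then x else u x)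
    (fun x => if x < u x then x else u x) (fun x hx => ?_) (fun x hx => ?_) (fun x hx => ?_)
    (fun x hx => ?_) fun x _ => by rw [apply_ite f, hf, ite_self]
  all_goals
    have := hσ x
    rw [mem_filter_univ] at hx
    grind

theorem pairSign_mul (hu : u * u = 1) (σ τ : Equiv.Perm (Fin n)) :
    pairSign (σ * τ) u = pairSign σ (τ * u * τ⁻¹) * pairSign τ u := by
  have huu (x : Fin n) : u (u x) = x := Equiv.congr_fun hu x
  have hconj (x : Fin n) : (τ * u * τ⁻¹) (τ x) = τ (u x) := by
    rw [Equiv.Perm.mul_apply, Equiv.Perm.mul_apply, Equiv.Perm.inv_def, Equiv.symm_apply_apply]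
  have hreindex : ∏ x with x < u x, orderSign σ (τ x) (τ (u x)) =
      ∏ y with y < (τ * u * τ⁻¹) y, orderSign σ y ((τ * u * τ⁻¹) y) := by
    rw [prod_filter_lt_eq hu τ fun x => by rw [huu, orderSign_comm]]
    exact prod_equiv τ (fun x => by simp only [mem_filter_univ, hconj]) fun x _ => by rw [hconj]
  have hconj_sq : τ * u * τ⁻¹ * (τ * u * τ⁻¹) = 1 := by
    rw [conj_mul, hu, mul_one, mul_inv_cancel]
  rw [pairSign_eq_prod_orderSign hu, pairSign_eq_prod_orderSign hconj_sq,
    pairSign_eq_prod_orderSign hu, ← hreindex, ← prod_mul_distrib]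
  exact prod_congr rfl fun x _ => orderSign_mul σ τ x (u x)

theorem pairSign_one (hu : u * u = 1) : pairSign 1 u = 1 := by
  rw [pairSign_eq_prod_orderSign hu]
  exact prod_eq_one fun x _ => if_pos Iff.rfl

end PairSignCocycle

section CommutingInvolutions

variable {X : Type*} {σ u : Equiv.Perm X} {x y : X}

theorem sameCycle_apply_apply_iff (hcomm : Commute σ u) :
    σ.SameCycle (u x) (u y) ↔ σ.SameCycle x y := by
  have h := Equiv.Perm.sameCycle_conj (f := σ) (g := u) (x := u x) (y := u y)
  rwa [← hcomm.eq, mul_inv_cancel_right, Equiv.Perm.inv_def, Equiv.symm_apply_apply,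
    Equiv.symm_apply_apply] at h

variable [Fintype X] [DecidableEq X]

/-- The length of the cycle of `σ` through `x`; it is `1` at a fixed point. -/
noncomputable def cycleLength (σ : Equiv.Perm X) (x : X) : ℕ := orderOf (σ.cycleOf x)

theorem zpow_apply_eq_self_iff {k : ℤ} : (σ ^ k) x = x ↔ (cycleLength σ x : ℤ) ∣ k := by
  rw [cycleLength, orderOf_dvd_iff_zpow_eq_one]
  refine ⟨fun h => Equiv.ext fun y => ?_, fun h => ?_⟩
  · by_cases hy : σ.SameCycle x y
    · rw [hy.cycleOf_eq, Equiv.Perm.cycleOf_zpow_apply_self, Equiv.Perm.one_apply]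
      obtain ⟨j, rfl⟩ := hy
      rw [Equiv.Perm.zpow_apply_comm, h]
    · exact Equiv.Perm.zpow_apply_eq_self_of_apply_eq_self
        (Equiv.Perm.cycleOf_apply_of_not_sameCycle hy) k
  · rw [← Equiv.Perm.cycleOf_zpow_apply_self, h, Equiv.Perm.one_apply]

theorem zpow_apply_eq_zpow_apply_iff {k l : ℤ} :
    (σ ^ k) x = (σ ^ l) x ↔ (cycleLength σ x : ℤ) ∣ k - l := by
  rw [← zpow_apply_eq_self_iff, ← (σ ^ l).injective.eq_iff (a := (σ ^ (k - l)) x),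
    ← Equiv.Perm.mul_apply, ← zpow_add, add_sub_cancel]

theorem cycleLength_eq_of_sameCycle (h : σ.SameCycle x y) : cycleLength σ x = cycleLength σ y := by
  rw [cycleLength, cycleLength, h.cycleOf_eq]

theorem sign_cycleOf_of_even (heven : Even (cycleLength σ x)) :
    Equiv.Perm.sign (σ.cycleOf x) = -1 := by
  have hmoved : σ x ≠ x := fun hx => by
    rw [cycleLength, (Equiv.Perm.cycleOf_eq_one_iff σ).2 hx, orderOf_one] at heven
    exact Nat.not_even_one heven
  have hcycle := σ.isCycle_cycleOf hmoved
  rw [hcycle.sign, ← hcycle.orderOf, (show Even (orderOf (σ.cycleOf x)) from heven).neg_one_pow]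

theorem commute_cycleOf (hcomm : Commute σ u) (hx : σ.SameCycle x (u x)) :
    Commute (σ.cycleOf x) u := by
  refine Equiv.ext fun y => ?_
  have hiff : σ.SameCycle x (u y) ↔ σ.SameCycle x y :=
    ⟨fun h => (sameCycle_apply_apply_iff hcomm).1 (hx.symm.trans h),
      fun h => hx.trans ((sameCycle_apply_apply_iff hcomm).2 h)⟩
  rw [Equiv.Perm.mul_apply, Equiv.Perm.mul_apply, Equiv.Perm.cycleOf_apply,
    Equiv.Perm.cycleOf_apply, apply_ite u]
  simp only [hiff, ← Equiv.Perm.mul_apply, hcomm.eq]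

theorem cycleLength_dvd_two_mul (hcomm : Commute σ u) (hu : u * u = 1) {k : ℤ}
    (hk : (σ ^ k) x = u x) : (cycleLength σ x : ℤ) ∣ 2 * k := by
  rw [← zpow_apply_eq_self_iff, two_mul, zpow_add, Equiv.Perm.mul_apply, hk,
    ← Equiv.Perm.mul_apply, (hcomm.zpow_left k).eq, Equiv.Perm.mul_apply, hk,
    ← Equiv.Perm.mul_apply, hu, Equiv.Perm.one_apply]

theorem apply_eq_self_of_odd (hcomm : Commute σ u) (hu : u * u = 1) (hx : σ.SameCycle x (u x))
    (hodd : Odd (cycleLength σ x)) : u x = x := by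
  obtain ⟨k, hk⟩ := hx
  have hcoprime : IsCoprime (cycleLength σ x : ℤ) 2 :=
    Nat.isCoprime_iff_coprime.2 (Nat.coprime_two_right.2 hodd)
  rw [← hk, zpow_apply_eq_self_iff]
  exact hcoprime.dvd_of_dvd_mul_left (cycleLength_dvd_two_mul hcomm hu hk)

/-- Rotation by half a turn of the cycle of `σ` through `x`, the identity elsewhere; it is only
meaningful when that cycle has even length. -/
noncomputable def halfTurn (σ : Equiv.Perm X) (x : X) : Equiv.Perm X :=
  σ.cycleOf x ^ (cycleLength σ x / 2)

theorem halfTurn_mul_self (heven : Even (cycleLength σ x)) :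
    halfTurn σ x * halfTurn σ x = 1 := by
  rw [halfTurn, ← pow_add, ← two_mul, Nat.two_mul_div_two_of_even heven, cycleLength,
    pow_orderOf_eq_one]

theorem halfTurn_apply_self : halfTurn σ x x = (σ ^ (cycleLength σ x / 2)) x :=
  Equiv.Perm.cycleOf_pow_apply_self σ x _

theorem halfTurn_apply_of_not_sameCycle (h : ¬σ.SameCycle x y) : halfTurn σ x y = y :=
  Equiv.Perm.pow_apply_eq_self_of_apply_eq_self
    (Equiv.Perm.cycleOf_apply_of_not_sameCycle h) _

theorem halfTurn_eq_of_sameCycle (h : σ.SameCycle x y) : halfTurn σ x = halfTurn σ y := by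
  rw [halfTurn, halfTurn, cycleLength_eq_of_sameCycle h, h.cycleOf_eq]

theorem sameCycle_halfTurn : σ.SameCycle y (halfTurn σ x y) := by
  by_cases h : σ.SameCycle x y
  · rw [halfTurn_eq_of_sameCycle h, halfTurn_apply_self]
    exact Equiv.Perm.sameCycle_pow_right.2 (Equiv.Perm.SameCycle.refl σ y)
  · rw [halfTurn_apply_of_not_sameCycle h]

theorem halfTurn_apply_ne (heven : Even (cycleLength σ x)) : halfTurn σ x x ≠ x := by
  rw [halfTurn_apply_self, ← zpow_natCast, Ne, zpow_apply_eq_self_iff, Int.natCast_dvd_natCast]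
  have hpos : 0 < cycleLength σ x := orderOf_pos _
  obtain ⟨m, hm⟩ := heven
  exact Nat.not_dvd_of_pos_of_lt (by lia) (by lia)

theorem commute_halfTurn (hcomm : Commute σ u) (hx : σ.SameCycle x (u x)) :
    Commute (halfTurn σ x) u := (commute_cycleOf hcomm hx).pow_left _

theorem apply_eq_halfTurn (hcomm : Commute σ u) (hu : u * u = 1) (hx : σ.SameCycle x (u x))
    (heven : Even (cycleLength σ x)) (hmoved : u x ≠ x) : u x = halfTurn σ x x := by
  obtain ⟨k, hk⟩ := hx
  obtain ⟨m, hm⟩ := cycleLength_dvd_two_mul hcomm hu hk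
  obtain ⟨l, hl⟩ := heven
  have hm_odd : Odd m := by
    by_contra hm_even
    obtain ⟨j, rfl⟩ := Int.not_odd_iff_even.1 hm_even
    exact hmoved (hk ▸ zpow_apply_eq_self_iff.2 ⟨j, by lia⟩)
  obtain ⟨j, rfl⟩ := hm_odd
  have hk_half : k = (cycleLength σ x / 2 : ℕ) + cycleLength σ x * j := by
    have hhalf : cycleLength σ x / 2 = l := by lia
    rw [hhalf]
    lia
  rw [halfTurn_apply_self, ← zpow_natCast, ← hk, hk_half, zpow_add, Equiv.Perm.mul_apply,
    zpow_apply_eq_self_iff.2 (dvd_mul_right _ j)]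

end CommutingInvolutions

section HalfTurnSign

variable {n : ℕ} {σ u : Equiv.Perm (Fin n)} {x : Fin n}

theorem exists_restrict_moved (hcomm : Commute σ u) :
    ∃ ρ : Equiv.Perm (Fin n), ∀ y, ρ y = if u y = y then y else σ y := by
  have hmoved (y : Fin n) : u (σ y) ≠ σ y ↔ u y ≠ y := by
    rw [← Equiv.Perm.mul_apply, ← hcomm.eq, Equiv.Perm.mul_apply, σ.injective.ne_iff]
  refine ⟨Equiv.Perm.ofSubtype (p := fun y => u y ≠ y) (σ.subtypePerm hmoved), fun y => ?_⟩
  split_ifs with hy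
  · exact Equiv.Perm.ofSubtype_apply_of_not_mem (p := fun y => u y ≠ y) _ (not_not.2 hy)
  · exact Equiv.Perm.ofSubtype_apply_of_mem (p := fun y => u y ≠ y) _ hy

theorem mul_halfTurn_mul_self (hcomm : Commute σ u) (hu : u * u = 1) (hx : σ.SameCycle x (u x))
    (heven : Even (cycleLength σ x)) : u * halfTurn σ x * (u * halfTurn σ x) = 1 := by
  rw [(commute_halfTurn hcomm hx).mul_mul_mul_comm, hu, halfTurn_mul_self heven, one_mul]

theorem commute_mul_halfTurn (hcomm : Commute σ u) : Commute σ (u * halfTurn σ x) :=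
  hcomm.mul_right (commute_halfTurn (Commute.refl σ)
    (Equiv.Perm.sameCycle_apply_right.2 (Equiv.Perm.SameCycle.refl σ x))).symm

theorem pairSign_mul_halfTurn_of_apply_eq_self (hcomm : Commute σ u) (hu : u * u = 1)
    (hx : u x = x) (heven : Even (cycleLength σ x)) :
    pairSign σ (u * halfTurn σ x) = -pairSign σ u := by
  have hsame : σ.SameCycle x (u x) := hx.symm ▸ Equiv.Perm.SameCycle.refl σ x
  obtain ⟨ρ, hρ⟩ := exists_restrict_moved hcomm
  have hρ_cycle (y : Fin n) :
      (ρ * σ.cycleOf x) y = if (u * halfTurn σ x) y = y then y else σ y := by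
    rw [Equiv.Perm.mul_apply, Equiv.Perm.mul_apply]
    by_cases hy : σ.SameCycle x y
    · have hfix {z : Fin n} (hz : σ.SameCycle x z) : u z = z := by
        obtain ⟨k, rfl⟩ := hz
        rw [← Equiv.Perm.mul_apply, ← (hcomm.zpow_left k).eq, Equiv.Perm.mul_apply, hx]
      have hne : halfTurn σ x y ≠ y := by
        rw [halfTurn_eq_of_sameCycle hy]
        exact halfTurn_apply_ne (cycleLength_eq_of_sameCycle hy ▸ heven)
      rw [hy.cycleOf_apply, hρ, if_pos (hfix (Equiv.Perm.sameCycle_apply_right.2 hy)),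
        hfix (hy.trans sameCycle_halfTurn), if_neg hne]
    · rw [Equiv.Perm.cycleOf_apply_of_not_sameCycle hy, halfTurn_apply_of_not_sameCycle hy, hρ]
  rw [pairSign_eq_sign (commute_mul_halfTurn hcomm)
    (mul_halfTurn_mul_self hcomm hu hsame heven) hρ_cycle, pairSign_eq_sign hcomm hu hρ, map_mul,
    sign_cycleOf_of_even heven, mul_neg_one, Units.val_neg]

theorem pairSign_mul_halfTurn (hcomm : Commute σ u) (hu : u * u = 1) (hx : σ.SameCycle x (u x))
    (heven : Even (cycleLength σ x)) : pairSign σ (u * halfTurn σ x) = -pairSign σ u := by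
  by_cases hfix : u x = x
  · exact pairSign_mul_halfTurn_of_apply_eq_self hcomm hu hfix heven
  · have hfix' : (u * halfTurn σ x) x = x := by
      rw [Equiv.Perm.mul_apply, ← apply_eq_halfTurn hcomm hu hx heven hfix,
        ← Equiv.Perm.mul_apply, hu, Equiv.Perm.one_apply]
    rw [← neg_eq_iff_eq_neg, ← pairSign_mul_halfTurn_of_apply_eq_self (commute_mul_halfTurn hcomm)
      (mul_halfTurn_mul_self hcomm hu hx heven) hfix' heven, mul_assoc,
      halfTurn_mul_self heven, mul_one]

end HalfTurnSign

section SquareRoots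

variable {X : Type*} [Fintype X] [LinearOrder X] {σ u τ : Equiv.Perm X} {x : X}

/-- The square root of `σ` on its odd cycles: on a cycle of length `2m + 1` it is `σ ^ (m + 1)`. -/
noncomputable def oddRoot (σ : Equiv.Perm X) (x : X) : X := (σ ^ ((cycleLength σ x + 1) / 2)) x

theorem sameCycle_oddRoot : σ.SameCycle x (oddRoot σ x) :=
  Equiv.Perm.sameCycle_pow_right.2 (Equiv.Perm.SameCycle.refl σ x)

theorem oddRoot_oddRoot (hodd : Odd (cycleLength σ x)) : oddRoot σ (oddRoot σ x) = σ x := by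
  have hsum : (cycleLength σ x + 1) / 2 + (cycleLength σ x + 1) / 2 = 1 + cycleLength σ x := by
    obtain ⟨m, hm⟩ := hodd
    lia
  have hperiod : (σ ^ cycleLength σ x) x = x := by
    rw [← zpow_natCast, zpow_apply_eq_self_iff]
  rw [oddRoot, ← cycleLength_eq_of_sameCycle sameCycle_oddRoot, oddRoot,
    ← Equiv.Perm.mul_apply, ← pow_add, hsum, pow_add, pow_one, Equiv.Perm.mul_apply, hperiod]

theorem apply_oddRoot_of_apply_eq_self (hcomm : Commute σ u) (hx : u x = x) :
    u (oddRoot σ x) = oddRoot σ x := by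
  rw [oddRoot, ← Equiv.Perm.mul_apply, ← (hcomm.pow_left _).eq, Equiv.Perm.mul_apply, hx]

theorem odd_and_eq_oddRoot_of_sameCycle (hτ : τ * τ = σ) (hx : σ.SameCycle x (τ x)) :
    Odd (cycleLength σ x) ∧ τ x = oddRoot σ x := by
  have hcomm : Commute σ τ := hτ ▸ (Commute.refl τ).mul_left (Commute.refl τ)
  obtain ⟨k, hk⟩ := hx
  have hdouble : (σ ^ (2 * k)) x = (σ ^ (1 : ℤ)) x := by
    rw [two_mul, zpow_add, Equiv.Perm.mul_apply, hk, ← Equiv.Perm.mul_apply,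
      (hcomm.zpow_left k).eq, Equiv.Perm.mul_apply, hk, ← Equiv.Perm.mul_apply, hτ, zpow_one]
  have hdvd : (cycleLength σ x : ℤ) ∣ 2 * k - 1 := zpow_apply_eq_zpow_apply_iff.1 hdouble
  have hodd : Odd (cycleLength σ x) := by
    have hodd_sub : Odd (2 * k - 1) := ⟨k - 1, by ring⟩
    obtain ⟨m, hm⟩ := hdvd
    exact (Int.odd_coe_nat _).1 (Int.odd_mul.1 (hm ▸ hodd_sub)).1
  have hcoprime : IsCoprime (cycleLength σ x : ℤ) 2 :=
    Nat.isCoprime_iff_coprime.2 (Nat.coprime_two_right.2 hodd)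
  have hhalf : 2 * (k - ((cycleLength σ x + 1) / 2 : ℕ)) = 2 * k - 1 - cycleLength σ x := by
    obtain ⟨m, hm⟩ := hodd
    lia
  refine ⟨hodd, ?_⟩
  rw [oddRoot, ← hk, ← zpow_natCast, zpow_apply_eq_zpow_apply_iff]
  exact hcoprime.dvd_of_dvd_mul_left (hhalf ▸ dvd_sub hdvd dvd_rfl)

/-- The points lying on an even cycle of `σ` that `u` maps to itself. -/
def evenInvariantPoints (σ u : Equiv.Perm X) : Set X :=
  {x | σ.SameCycle x (u x) ∧ Even (cycleLength σ x)}

theorem apply_eq_self_of_evenInvariantPoints_eq_empty (hcomm : Commute σ u) (hu : u * u = 1)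
    (hempty : evenInvariantPoints σ u = ∅) (hx : σ.SameCycle x (u x)) :
    u x = x ∧ Odd (cycleLength σ x) := by
  have hodd : Odd (cycleLength σ x) := Nat.not_even_iff_odd.1 fun heven =>
    Set.eq_empty_iff_forall_notMem.1 hempty x ⟨hx, heven⟩
  exact ⟨apply_eq_self_of_odd hcomm hu hx hodd, hodd⟩

/-- The square root of `σ` attached to an involution `u` commuting with `σ`: two cycles exchanged
by `u` are interleaved, passing from the smaller to the larger by `u` and back by `σ * u`. -/
noncomputable def rootOfInvolution (σ u : Equiv.Perm X) (x : X) : X :=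
  if cycleMax σ x < cycleMax σ (u x) then u x
  else if cycleMax σ (u x) < cycleMax σ x then σ (u x)
  else oddRoot σ x

/-- The involution attached to a square root `τ` of `σ`, inverse to `rootOfInvolution`. -/
noncomputable def involutionOfRoot (σ τ : Equiv.Perm X) (x : X) : X :=
  if cycleMax σ x < cycleMax σ (τ x) then τ x
  else if cycleMax σ (τ x) < cycleMax σ x then σ.symm (τ x)
  else x

theorem cycleMax_apply : cycleMax σ (σ x) = cycleMax σ x :=
  cycleMax_eq_iff.2 (Equiv.Perm.sameCycle_apply_left.2 (Equiv.Perm.SameCycle.refl σ x))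

theorem cycleMax_symm_apply : cycleMax σ (σ.symm x) = cycleMax σ x := by
  rw [← cycleMax_apply, Equiv.apply_symm_apply]

theorem cycleMax_oddRoot : cycleMax σ (oddRoot σ x) = cycleMax σ x :=
  (cycleMax_eq_iff.2 sameCycle_oddRoot).symm

theorem rootOfInvolution_rootOfInvolution (hcomm : Commute σ u) (hu : u * u = 1)
    (hempty : evenInvariantPoints σ u = ∅) (x : X) :
    rootOfInvolution σ u (rootOfInvolution σ u x) = σ x := by
  have huu : u (u x) = x := Equiv.congr_fun hu x
  have hσu : u (σ (u x)) = σ (u (u x)) := (Equiv.congr_fun hcomm.eq (u x)).symm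
  rcases lt_trichotomy (cycleMax σ x) (cycleMax σ (u x)) with h | h | h
  · simp only [rootOfInvolution, if_pos h, huu, if_neg h.not_gt]
  · obtain ⟨hfix, hodd⟩ := apply_eq_self_of_evenInvariantPoints_eq_empty hcomm hu hempty
      (cycleMax_eq_iff.1 h)
    simp only [rootOfInvolution, h.not_gt, h.not_lt, if_false, cycleMax_oddRoot,
      apply_oddRoot_of_apply_eq_self hcomm hfix, lt_irrefl, oddRoot_oddRoot hodd]
  · simp only [rootOfInvolution, if_neg h.not_gt, if_pos h, hσu, huu, cycleMax_apply]

theorem involutionOfRoot_rootOfInvolution (hcomm : Commute σ u) (hu : u * u = 1)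
    (hempty : evenInvariantPoints σ u = ∅) {τ : Equiv.Perm X}
    (hτ : ∀ x, τ x = rootOfInvolution σ u x) (x : X) : involutionOfRoot σ τ x = u x := by
  rcases lt_trichotomy (cycleMax σ x) (cycleMax σ (u x)) with h | h | h
  · simp only [involutionOfRoot, hτ, rootOfInvolution, if_pos h]
  · have hfix := (apply_eq_self_of_evenInvariantPoints_eq_empty hcomm hu hempty
      (cycleMax_eq_iff.1 h)).1
    simp only [involutionOfRoot, hτ, rootOfInvolution, hfix, lt_irrefl, if_false,
      cycleMax_oddRoot]
  · simp only [involutionOfRoot, hτ, rootOfInvolution, if_neg h.not_gt, if_pos h,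
      cycleMax_apply, Equiv.symm_apply_apply]

theorem involutionOfRoot_involutionOfRoot (hτ : τ * τ = σ) (x : X) :
    involutionOfRoot σ τ (involutionOfRoot σ τ x) = x := by
  have hττ (y : X) : τ (τ y) = σ y := Equiv.congr_fun hτ y
  have hinv : τ (σ.symm (τ x)) = x := τ.injective (by rw [hττ, Equiv.apply_symm_apply])
  rcases lt_trichotomy (cycleMax σ x) (cycleMax σ (τ x)) with h | h | h
  · simp only [involutionOfRoot, if_pos h, hττ, cycleMax_apply, if_neg h.not_gt,
      Equiv.symm_apply_apply]
  · simp only [involutionOfRoot, h, lt_irrefl, if_false]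
  · simp only [involutionOfRoot, if_neg h.not_gt, if_pos h, hinv, cycleMax_symm_apply]

theorem involutionOfRoot_apply (hτ : τ * τ = σ) (x : X) :
    involutionOfRoot σ τ (σ x) = σ (involutionOfRoot σ τ x) := by
  have hcomm : τ (σ x) = σ (τ x) := by rw [← hτ]; rfl
  simp only [involutionOfRoot, hcomm, cycleMax_apply, apply_ite σ, Equiv.symm_apply_apply,
    Equiv.apply_symm_apply]

theorem evenInvariantPoints_eq_empty_of_root (hτ : τ * τ = σ)
    (hu : ∀ x, u x = involutionOfRoot σ τ x) : evenInvariantPoints σ u = ∅ := by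
  refine Set.eq_empty_iff_forall_notMem.2 fun x ⟨hx, heven⟩ => ?_
  have hcycle : cycleMax σ x = cycleMax σ (τ x) := by
    rw [← cycleMax_eq_iff, hu, involutionOfRoot] at hx
    split_ifs at hx with h h'
    · exact hx
    · rwa [cycleMax_symm_apply] at hx
    · exact le_antisymm (not_lt.1 h') (not_lt.1 h)
  exact Nat.not_odd_iff_even.2 heven
    (odd_and_eq_oddRoot_of_sameCycle hτ (cycleMax_eq_iff.1 hcycle)).1

theorem rootOfInvolution_involutionOfRoot (hτ : τ * τ = σ)
    (hu : ∀ x, u x = involutionOfRoot σ τ x) (x : X) : rootOfInvolution σ u x = τ x := by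
  rcases lt_trichotomy (cycleMax σ x) (cycleMax σ (τ x)) with h | h | h
  · simp only [rootOfInvolution, hu, involutionOfRoot, if_pos h]
  · have hfix : u x = x := by rw [hu, involutionOfRoot, ← h, if_neg (lt_irrefl _),
      if_neg (lt_irrefl _)]
    rw [rootOfInvolution, hfix, if_neg (lt_irrefl _), if_neg (lt_irrefl _),
      (odd_and_eq_oddRoot_of_sameCycle hτ (cycleMax_eq_iff.1 h)).2]
  · simp only [rootOfInvolution, hu, involutionOfRoot, if_neg h.not_gt, if_pos h,
      cycleMax_symm_apply, Equiv.apply_symm_apply]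

end SquareRoots

section RootCount

variable {X α : Type*} {σ : Equiv.Perm X} {θ : X → α}

/-- A self-map whose square is the permutation `σ`, as a permutation. -/
noncomputable def permOfSquare {f : X → X} (h : ∀ x, f (f x) = σ x) : Equiv.Perm X :=
  have hf : f ∘ f = σ := funext h
  Equiv.ofBijective f ⟨Function.Injective.of_comp (f := f) (hf ▸ σ.injective),
    Function.Surjective.of_comp (g := f) (hf ▸ σ.surjective)⟩

theorem permOfSquare_apply {f : X → X} (h : ∀ x, f (f x) = σ x) (x : X) :
    permOfSquare h x = f x := rfl

theorem apply_eq_of_sameCycle [Finite X] (hθ : ∀ x, θ (σ x) = θ x) {x y : X} (h : σ.SameCycle x y) :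
    θ y = θ x := by
  have hnat (k : ℕ) (z : X) : θ ((σ ^ k) z) = θ z := by
    induction k with
    | zero => rfl
    | succ k ih => rw [pow_succ', Equiv.Perm.mul_apply, hθ, ih]
  obtain ⟨k, -, -, rfl⟩ := h.exists_pow_eq'
  exact hnat k x

variable [Fintype X] [LinearOrder X] [DecidableEq α]

/-- The involutions (including `1`) that commute with `σ` and preserve the colouring `θ`. -/
def commutingInvolutions (σ : Equiv.Perm X) (θ : X → α) : Finset (Equiv.Perm X) :=
  {u | u * u = 1 ∧ σ * u = u * σ ∧ ∀ x, θ (u x) = θ x}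

/-- The square roots of `σ` that preserve the colouring `θ`. -/
def squareRoots (σ : Equiv.Perm X) (θ : X → α) : Finset (Equiv.Perm X) :=
  {τ | τ * τ = σ ∧ ∀ x, θ (τ x) = θ x}

theorem mem_commutingInvolutions {u : Equiv.Perm X} : u ∈ commutingInvolutions σ θ ↔
    u * u = 1 ∧ Commute σ u ∧ ∀ x, θ (u x) = θ x := by
  rw [commutingInvolutions, mem_filter_univ]
  rfl

theorem mem_squareRoots {τ : Equiv.Perm X} :
    τ ∈ squareRoots σ θ ↔ τ * τ = σ ∧ ∀ x, θ (τ x) = θ x := by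
  rw [squareRoots, mem_filter_univ]

theorem rootOfInvolution_mem_squareRoots (hθ : ∀ x, θ (σ x) = θ x) {u : Equiv.Perm X}
    (hu : u ∈ commutingInvolutions σ θ)
    (hroot : ∀ x, rootOfInvolution σ u (rootOfInvolution σ u x) = σ x) :
    permOfSquare hroot ∈ squareRoots σ θ := by
  refine mem_squareRoots.2 ⟨Equiv.ext hroot, fun x => ?_⟩
  rw [permOfSquare_apply, rootOfInvolution]
  have hθu := (mem_commutingInvolutions.1 hu).2.2 x
  split_ifs
  · exact hθu
  · rw [hθ, hθu]
  · exact apply_eq_of_sameCycle hθ sameCycle_oddRoot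

theorem involutionOfRoot_mem_commutingInvolutions (hθ : ∀ x, θ (σ x) = θ x) {τ : Equiv.Perm X}
    (hτ : τ ∈ squareRoots σ θ)
    (hinv : ∀ x, involutionOfRoot σ τ (involutionOfRoot σ τ x) = (1 : Equiv.Perm X) x) :
    permOfSquare hinv ∈ commutingInvolutions σ θ := by
  obtain ⟨hτσ, hθτ⟩ := mem_squareRoots.1 hτ
  refine mem_commutingInvolutions.2 ⟨Equiv.ext hinv,
    Equiv.ext fun x => (involutionOfRoot_apply hτσ x).symm, fun x => ?_⟩
  rw [permOfSquare_apply, involutionOfRoot]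
  split_ifs
  · exact hθτ x
  · rw [← hθ, Equiv.apply_symm_apply, hθτ]
  · rfl

open Classical in
theorem card_commutingInvolutions_eq_card_squareRoots (hθ : ∀ x, θ (σ x) = θ x) :
    #{u ∈ commutingInvolutions σ θ | evenInvariantPoints σ u = ∅} = #(squareRoots σ θ) := by
  have hroot (u : Equiv.Perm X)
      (hu : u ∈ {u ∈ commutingInvolutions σ θ | evenInvariantPoints σ u = ∅}) (x : X) :
      rootOfInvolution σ u (rootOfInvolution σ u x) = σ x := by
    obtain ⟨hu, hempty⟩ := mem_filter.1 hu
    obtain ⟨huu, hcomm, -⟩ := mem_commutingInvolutions.1 hu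
    exact rootOfInvolution_rootOfInvolution hcomm huu hempty x
  have hinv (τ : Equiv.Perm X) (hτ : τ ∈ squareRoots σ θ) (x : X) :
      involutionOfRoot σ τ (involutionOfRoot σ τ x) = (1 : Equiv.Perm X) x :=
    involutionOfRoot_involutionOfRoot (mem_squareRoots.1 hτ).1 x
  refine card_bij' (fun u hu => permOfSquare (hroot u hu)) (fun τ hτ => permOfSquare (hinv τ hτ))
    (fun u hu => rootOfInvolution_mem_squareRoots hθ (mem_filter.1 hu).1 _)
    (fun τ hτ => mem_filter.2 ⟨involutionOfRoot_mem_commutingInvolutions hθ hτ _,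
      evenInvariantPoints_eq_empty_of_root (mem_squareRoots.1 hτ).1 fun _ => rfl⟩)
    (fun u hu => Equiv.ext fun x => ?_) (fun τ hτ => Equiv.ext fun x => ?_)
  · obtain ⟨hu, hempty⟩ := mem_filter.1 hu
    obtain ⟨huu, hcomm, -⟩ := mem_commutingInvolutions.1 hu
    exact involutionOfRoot_rootOfInvolution hcomm huu hempty (fun _ => rfl) x
  · exact rootOfInvolution_involutionOfRoot (mem_squareRoots.1 hτ).1 (fun _ => rfl) x

end RootCount

section SignedCount

variable {n : ℕ} {α : Type*} [DecidableEq α] {σ u : Equiv.Perm (Fin n)} {θ : Fin n → α}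

theorem pairSign_eq_one (hcomm : Commute σ u) (hu : u * u = 1)
    (hempty : evenInvariantPoints σ u = ∅) : pairSign σ u = 1 := by
  have huu (x : Fin n) : u (u x) = x := Equiv.congr_fun hu x
  obtain ⟨ρ, hρ⟩ := exists_restrict_moved hcomm
  have hσu (x : Fin n) : u (σ x) = σ (u x) := (Equiv.congr_fun hcomm.eq x).symm
  have hσ_inj (x : Fin n) : σ (u x) = σ x ↔ u x = x := σ.injective.eq_iff
  rw [pairSign_eq_sign hcomm hu hρ, sign_eq_one_of_commute (u := u)
    (A := {x | cycleMax σ x < cycleMax σ (u x)}) (Equiv.ext fun x => ?_) hu (fun x => ?_)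
    (fun x hx => ?_) fun x hx => ?_, Units.val_one]
  · have := hσ_inj x
    simp only [Equiv.Perm.mul_apply, hρ]
    grind
  · rw [hρ]
    split_ifs
    · rfl
    · rw [Set.mem_ofPred_eq, Set.mem_ofPred_eq, cycleMax_apply, hσu, cycleMax_apply]
  · simpa only [Set.mem_ofPred_eq, huu, not_lt] using le_of_lt hx
  · simp only [Set.mem_ofPred_eq, huu]
    refine lt_or_gt_of_ne fun h => hx ?_
    rw [hρ, if_pos (apply_eq_self_of_evenInvariantPoints_eq_empty hcomm hu hempty
      (cycleMax_eq_iff.1 h)).1]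

theorem evenInvariantPoints_mul_halfTurn {x : Fin n} (hcomm : Commute σ u) :
    evenInvariantPoints σ (u * halfTurn σ x) = evenInvariantPoints σ u := by
  ext y
  have h : σ.SameCycle (u y) ((u * halfTurn σ x) y) :=
    (sameCycle_apply_apply_iff hcomm).2 sameCycle_halfTurn
  exact and_congr_left fun _ => ⟨fun hy => hy.trans h.symm, fun hy => hy.trans h⟩

open Classical in
/-- Multiplying by a half turn of one fixed even cycle pairs off the terms of opposite sign. -/
theorem sum_pairSign_eq_zero (hθ : ∀ x, θ (σ x) = θ x) {T : Set (Fin n)} (hT : T ≠ ∅) :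
    ∑ u ∈ commutingInvolutions σ θ with evenInvariantPoints σ u = T, pairSign σ u = 0 := by
  obtain ⟨x, hx⟩ := Set.nonempty_iff_ne_empty.2 hT
  have hunpack {u : Equiv.Perm (Fin n)}
      (hu : u ∈ commutingInvolutions σ θ ∧ evenInvariantPoints σ u = T) :
      u * u = 1 ∧ Commute σ u ∧ σ.SameCycle x (u x) ∧ Even (cycleLength σ x) := by
    obtain ⟨hu, rfl⟩ := hu
    obtain ⟨huu, hcomm, -⟩ := mem_commutingInvolutions.1 hu
    exact ⟨huu, hcomm, hx⟩
  refine sum_involution (fun u _ => u * halfTurn σ x) (fun u hu => ?_) (fun u hu _ h => ?_)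
    (fun u hu => ?_) fun u hu => ?_
  · obtain ⟨huu, hcomm, hsame, heven⟩ := hunpack (mem_filter.1 hu)
    rw [pairSign_mul_halfTurn hcomm huu hsame heven, add_neg_cancel]
  · obtain ⟨-, -, -, heven⟩ := hunpack (mem_filter.1 hu)
    exact halfTurn_apply_ne heven (Equiv.congr_fun (mul_eq_left.1 h) x)
  · obtain ⟨huu, hcomm, hsame, heven⟩ := hunpack (mem_filter.1 hu)
    obtain ⟨hu, hfiber⟩ := mem_filter.1 hu
    refine mem_filter.2 ⟨mem_commutingInvolutions.2 ⟨mul_halfTurn_mul_self hcomm huu hsame heven,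
      commute_mul_halfTurn hcomm, fun y => ?_⟩,
      (evenInvariantPoints_mul_halfTurn hcomm).trans hfiber⟩
    rw [Equiv.Perm.mul_apply, (mem_commutingInvolutions.1 hu).2.2,
      apply_eq_of_sameCycle hθ sameCycle_halfTurn]
  · rw [mul_assoc, halfTurn_mul_self (hunpack (mem_filter.1 hu)).2.2.2, mul_one]

theorem sum_pairSign_eq_card_squareRoots (hθ : ∀ x, θ (σ x) = θ x) :
    ∑ u ∈ commutingInvolutions σ θ, pairSign σ u = #(squareRoots σ θ) := by
  classical
  calc ∑ u ∈ commutingInvolutions σ θ, pairSign σ u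
      = ∑ u ∈ commutingInvolutions σ θ with evenInvariantPoints σ u = ∅, pairSign σ u := by
        rw [← sum_fiberwise _ (evenInvariantPoints σ), Fintype.sum_eq_single ∅ fun T hT =>
          sum_pairSign_eq_zero hθ hT]
    _ = ∑ u ∈ commutingInvolutions σ θ with evenInvariantPoints σ u = ∅, 1 := by
        refine sum_congr rfl fun u hu => ?_
        obtain ⟨hu, hempty⟩ := mem_filter.1 hu
        obtain ⟨huu, hcomm, -⟩ := mem_commutingInvolutions.1 hu
        exact pairSign_eq_one hcomm huu hempty
    _ = #(squareRoots σ θ) := by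
        rw [sum_const, nsmul_one, card_commutingInvolutions_eq_card_squareRoots hθ]

end SignedCount

section TwistedTrace

variable {Q Z R : Type*} [Fintype Q] [DecidableEq Q] [Fintype Z] [CommRing R]

/-- The trace of the endomorphism of `⨂ q, Z → R` that permutes the tensor factors by `s` and
acts by the matrices `A q`; for a single cycle `s` it is the trace of the product of the `A q`. -/
def twistedTrace (s : Equiv.Perm Q) (A : Q → Matrix Z Z R) : R :=
  ∑ z : Q → Z, ∏ q, A q (z q) (z (s q))

theorem twistedTrace_mul (s : Equiv.Perm Q) (X Y : Q → Matrix Z Z R) :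
    twistedTrace s (fun q => X q * Y q) =
      ∑ z : Q → Z, ∑ w : Q → Z, (∏ q, X q (z q) (w q)) * ∏ q, Y q (w q) (z (s q)) := by
  refine sum_congr rfl fun z _ => ?_
  simp only [Matrix.mul_apply, Fintype.prod_sum, prod_mul_distrib]

theorem twistedTrace_mul_comm (s : Equiv.Perm Q) (X Y : Q → Matrix Z Z R) :
    twistedTrace s (fun q => X q * Y q) = twistedTrace s (fun q => Y q * X (s q)) := by
  rw [twistedTrace_mul, twistedTrace_mul, sum_comm]
  refine sum_congr rfl fun w _ =>
    Fintype.sum_equiv (s.symm.arrowCongr (Equiv.refl Z)) _ _ fun z => ?_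
  rw [mul_comm, ← Equiv.prod_comp s fun q => X q (z q) (w q)]
  rfl

theorem twistedTrace_congr_of_intertwining [DecidableEq Z] {s : Equiv.Perm Q}
    {A B Φ Ψ : Q → Matrix Z Z R} (hΨ : ∀ q, Φ q * Ψ q = 1)
    (hΦ : ∀ q, A q * Φ (s q) = Φ q * B q) :
    twistedTrace s A = twistedTrace s B := by
  calc twistedTrace s A = twistedTrace s fun q => Φ q * (B q * Ψ (s q)) := by
        congr 1 with q : 1
        rw [← Matrix.mul_assoc, ← hΦ, Matrix.mul_assoc, hΨ, Matrix.mul_one]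
    _ = twistedTrace s fun q => B q * Ψ (s q) * Φ (s q) := twistedTrace_mul_comm s _ _
    _ = twistedTrace s B := by
        congr 1 with q : 1
        rw [Matrix.mul_assoc, mul_eq_one_comm.1 (hΨ (s q)), Matrix.mul_one]

theorem twistedTrace_ite [DecidableEq Z] (s : Equiv.Perm Q) (t : Q → Z → Z) (f : Q → Z → R) :
    twistedTrace s (fun q => Matrix.of fun x y => if y = t q x then f q x else 0) =
      ∑ z : Q → Z with ∀ q, z (s q) = t q (z q), ∏ q, f q (z q) := by
  simp only [twistedTrace, Matrix.of_apply, prod_ite_zero, sum_filter, mem_univ, forall_const]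

theorem sum_prod_eq_sum_prod_of_diagonalizes [DecidableEq Z] {s : Equiv.Perm Q}
    {t : Q → Z → Z} {f g : Q → Z → R} {Φ Ψ : Q → Matrix Z Z R} (hΨ : ∀ q, Φ q * Ψ q = 1)
    (hs : ∀ q, Φ (s q) = Φ q) (hΦ : ∀ q x θ, f q x * Φ q (t q x) θ = Φ q x θ * g q θ) :
    ∑ z : Q → Z with ∀ q, z (s q) = t q (z q), ∏ q, f q (z q) =
      ∑ θ : Q → Z with ∀ q, θ (s q) = θ q, ∏ q, g q (θ q) := by
  rw [← twistedTrace_ite s t f, ← twistedTrace_ite s (fun _ θ => θ) g]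
  refine twistedTrace_congr_of_intertwining hΨ fun q => ?_
  ext x θ
  simp only [Matrix.mul_apply, Matrix.of_apply, hs, ite_mul, mul_ite, zero_mul, mul_zero,
    sum_ite_eq, sum_ite_eq', mem_univ, if_true, hΦ]

end TwistedTrace

section Kernel

open ZMod (stdAddChar)

variable {r : ℕ} [NeZero r]

/-- The residue `k` with `x = 2k` or `x = 2k + 1` for representatives `x ∈ {0,…,r-1}`,
`k ∈ {0,…,r/2-1}`. -/
def half (x : ZMod r) : ZMod r := ((x.val / 2 : ℕ) : ZMod r)

/-- The contribution to `sign_e` of a fixed point of `|w|` at which `z_w` and `z_π` take the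
values `x` and `c`. -/
def shiftSign (x c : ZMod r) : ℤ :=
  if x.val % 2 = 1 ∧ r / 2 ≤ (half x + c).val then -1 else 1

theorem val_half (x : ZMod r) : (half x).val = x.val / 2 := by
  have := x.val_lt
  rw [half, ZMod.val_natCast, Nat.mod_eq_of_lt (by omega)]

theorem eq_parity_add_two_mul_half (x : ZMod r) :
    x = ((x.val % 2 : ℕ) : ZMod r) + 2 * half x := by
  conv_lhs => rw [← ZMod.natCast_zmod_val x, ← Nat.mod_add_div x.val 2]
  simp only [half, Nat.cast_add, Nat.cast_mul, Nat.cast_ofNat]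

theorem val_add_two_mul (hr : Even r) (x c : ZMod r) :
    (x + 2 * c).val =
      x.val % 2 + 2 * (half x + c).val - if r / 2 ≤ (half x + c).val then r else 0 := by
  have hx : x + 2 * c = ((x.val % 2 + 2 * (half x + c).val : ℕ) : ZMod r) := by
    push_cast
    rw [ZMod.natCast_zmod_val]
    linear_combination eq_parity_add_two_mul_half x
  have hlt := (half x + c).val_lt
  obtain ⟨h, rfl⟩ := hr
  rw [hx, ZMod.val_natCast]
  split_ifs with hv
  · rw [Nat.mod_eq_sub_mod (by omega), Nat.mod_eq_of_lt (by omega)]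
  · rw [Nat.mod_eq_of_lt (by omega), Nat.sub_zero]

theorem val_add_two_mul_mod_two (hr : Even r) (x c : ZMod r) :
    (x + 2 * c).val % 2 = x.val % 2 := by
  have h := val_add_two_mul hr x c
  obtain ⟨m, hm⟩ := hr
  split_ifs at h <;> omega

theorem half_add (hr : Even r) (x c : ZMod r) :
    half x + c =
      half (x + 2 * c) + if r / 2 ≤ (half x + c).val then ((r / 2 : ℕ) : ZMod r) else 0 := by
  have h := val_add_two_mul hr x c
  obtain ⟨m, hm⟩ := hr
  have hv : (half x + c).val =
      (x + 2 * c).val / 2 + if r / 2 ≤ (half x + c).val then r / 2 else 0 := by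
    split_ifs at h ⊢ <;> omega
  calc half x + c = (((half x + c).val : ℕ) : ZMod r) := (ZMod.natCast_zmod_val _).symm
    _ = _ := congrArg Nat.cast hv
    _ = _ := by rw [Nat.cast_add, Nat.cast_ite, Nat.cast_zero]; rfl

theorem stdAddChar_mul_half_card (hr : Even r) (θ : ZMod r) :
    stdAddChar (θ * ((r / 2 : ℕ) : ZMod r)) = (-1) ^ θ.val := by
  have hneg : stdAddChar ((r / 2 : ℕ) : ZMod r) = -1 := by
    have h := ZMod.stdAddChar_coe (N := r) ((r / 2 : ℕ) : ℤ)
    rw [Int.cast_natCast] at h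
    rw [h, ← Complex.exp_pi_mul_I, Int.cast_natCast, Nat.cast_div hr.two_dvd two_ne_zero]
    have hr0 : (r : ℂ) ≠ 0 := NeZero.ne _
    congr 1
    push_cast
    field_simp
  rw [← hneg, ← AddChar.map_nsmul_eq_pow, nsmul_eq_mul, ZMod.natCast_zmod_val]

theorem sum_stdAddChar_mul (b : ZMod r) :
    ∑ θ : ZMod r, stdAddChar (θ * b) = if b = 0 then (r : ℂ) else 0 := by
  rw [AddChar.sum_mulShift b (ZMod.isPrimitive_stdAddChar r), ZMod.card, Nat.cast_ite,
    Nat.cast_zero]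

theorem shiftSign_zero (x : ZMod r) : shiftSign x 0 = 1 := by
  have := x.val_lt
  rw [shiftSign, add_zero, val_half, if_neg (by omega)]

/-- The kernel on `ZMod r` that diagonalizes the signed translations by even residues: its rows
are supported on the characters `θ` with the parity of `x`. -/
noncomputable def parityKernel : Matrix (ZMod r) (ZMod r) ℂ := .of fun x θ =>
  if θ.val % 2 = x.val % 2 then stdAddChar (θ * half x) else 0

theorem shiftSign_mul_parityKernel (hr : Even r) (x c θ : ZMod r) :
    (shiftSign x c : ℂ) * parityKernel (x + 2 * c) θ = parityKernel x θ * stdAddChar (θ * c) := by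
  simp only [parityKernel, Matrix.of_apply, val_add_two_mul_mod_two hr]
  by_cases hp : θ.val % 2 = x.val % 2
  · rw [if_pos hp, if_pos hp, ← AddChar.map_add_eq_mul, ← mul_add, half_add hr x c, mul_add,
      AddChar.map_add_eq_mul, mul_comm, shiftSign]
    congr 1
    by_cases hv : r / 2 ≤ (half x + c).val
    · rw [if_pos hv, stdAddChar_mul_half_card hr, neg_one_pow_eq_pow_mod_two, hp]
      rcases Nat.mod_two_eq_zero_or_one x.val with hx | hx <;>
        simp only [hx, hv, zero_ne_one, and_true, if_true, if_false, pow_zero, pow_one,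
          Int.cast_neg, Int.cast_one]
    · simp only [hv, and_false, if_false, Int.cast_one, mul_zero, AddChar.map_zero_eq_one]
  · rw [if_neg hp, if_neg hp, mul_zero, zero_mul]

theorem shiftSign_add (hr : Even r) (x c d : ZMod r) :
    shiftSign x (c + d) = shiftSign x c * shiftSign (x + 2 * c) d := by
  have hne : parityKernel (x + 2 * c + 2 * d) x ≠ 0 := by
    rw [parityKernel, Matrix.of_apply, if_pos (by simp only [val_add_two_mul_mod_two hr])]
    exact (AddChar.val_isUnit _ _).ne_zero
  have hcd := shiftSign_mul_parityKernel hr x (c + d) x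
  rw [mul_add, mul_add, AddChar.map_add_eq_mul, ← mul_assoc, ← shiftSign_mul_parityKernel hr,
    mul_assoc, ← shiftSign_mul_parityKernel hr, ← add_assoc, ← mul_assoc] at hcd
  exact_mod_cast mul_right_cancel₀ hne hcd

theorem sum_stdAddChar_mul_of_parity (hr : Even r) (m : ℕ) (b : ZMod r) :
    ∑ θ : ZMod r with θ.val % 2 = m % 2, stdAddChar (θ * b) =
      r / 2 * ((if b = 0 then 1 else 0) +
        (-1) ^ m * if b + ((r / 2 : ℕ) : ZMod r) = 0 then 1 else 0) := by
  -- The indicator of `θ ≡ m` modulo 2 is `(1 + (-1) ^ m * (-1) ^ θ) / 2`.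
  have hterm (θ : ZMod r) :
      (if θ.val % 2 = m % 2 then stdAddChar (θ * b) else 0) =
        1 / 2 * (stdAddChar (θ * b) +
          (-1) ^ m * stdAddChar (θ * (b + ((r / 2 : ℕ) : ZMod r)))) := by
    rw [mul_add θ, AddChar.map_add_eq_mul, stdAddChar_mul_half_card hr,
      neg_one_pow_eq_pow_mod_two m, neg_one_pow_eq_pow_mod_two θ.val]
    rcases Nat.mod_two_eq_zero_or_one m with hm | hm <;>
      rcases Nat.mod_two_eq_zero_or_one θ.val with hθ | hθ <;> rw [hm, hθ] <;> norm_num <;> ring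
  simp only [sum_filter, hterm, ← mul_sum, sum_add_distrib, sum_stdAddChar_mul]
  split_ifs <;> ring

theorem sum_parityKernel_mul_star (hr : Even r) (x y : ZMod r) :
    ∑ θ, parityKernel x θ * star (parityKernel y θ) = if x = y then (r : ℂ) / 2 else 0 := by
  by_cases hp : x.val % 2 = y.val % 2
  · have hhalf : half x + -half y = 0 ↔ x = y := by
      refine ⟨fun h => ?_, by rintro rfl; exact add_neg_cancel _⟩
      rw [eq_parity_add_two_mul_half x, eq_parity_add_two_mul_half y, hp, add_neg_eq_zero.1 h]
    have hne : half x + -half y + ((r / 2 : ℕ) : ZMod r) ≠ 0 := by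
      intro h
      have hval : half y = ((x.val / 2 + r / 2 : ℕ) : ZMod r) := by
        rw [Nat.cast_add, ← half]
        linear_combination -h
      have := congrArg ZMod.val hval
      have := x.val_lt
      have := y.val_lt
      obtain ⟨m, hm⟩ := hr
      rw [val_half, ZMod.val_natCast, Nat.mod_eq_of_lt (by omega)] at *
      omega
    calc ∑ θ, parityKernel x θ * star (parityKernel y θ)
        = ∑ θ : ZMod r with θ.val % 2 = x.val % 2, stdAddChar (θ * (half x + -half y)) := by
          rw [sum_filter]
          refine sum_congr rfl fun θ _ => ?_
          simp only [parityKernel, Matrix.of_apply, ← hp]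
          split_ifs
          · rw [mul_add, mul_neg, AddChar.map_add_eq_mul, AddChar.map_neg_eq_conj]
            rfl
          · exact zero_mul _
      _ = _ := by
          rw [sum_stdAddChar_mul_of_parity hr, if_neg hne, mul_zero, add_zero, mul_ite, mul_one,
            mul_zero, if_congr hhalf rfl rfl]
  · rw [if_neg fun h => hp (congrArg (ZMod.val · % 2) h)]
    refine sum_eq_zero fun θ _ => ?_
    simp only [parityKernel, Matrix.of_apply]
    split_ifs with hx hy
    · exact absurd (hx.symm.trans hy) hp
    · rw [star_zero, mul_zero]
    all_goals rw [zero_mul]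

theorem parityKernel_mul_inv (hr : Even r) :
    parityKernel * ((2 / r : ℂ) • parityKernel.conjTranspose) =
      (1 : Matrix (ZMod r) (ZMod r) ℂ) := by
  have hr0 : (r : ℂ) ≠ 0 := NeZero.ne _
  ext x y
  rw [Matrix.mul_smul, Matrix.smul_apply, Matrix.mul_apply]
  simp only [Matrix.conjTranspose_apply, sum_parityKernel_mul_star hr, Matrix.one_apply,
    smul_eq_mul, mul_ite, mul_zero, div_mul_div_cancel₀ hr0,
    div_self (two_ne_zero' ℂ)]

/-- The character table of `ZMod r`. -/
noncomputable def charKernel : Matrix (ZMod r) (ZMod r) ℂ :=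
  .of fun x θ => stdAddChar (θ * x)

theorem charKernel_mul_inv :
    charKernel * ((1 / r : ℂ) • charKernel.conjTranspose) =
      (1 : Matrix (ZMod r) (ZMod r) ℂ) := by
  have hr0 : (r : ℂ) ≠ 0 := NeZero.ne _
  ext x y
  rw [Matrix.mul_smul, Matrix.smul_apply, Matrix.mul_apply]
  have hterm (θ : ZMod r) :
      charKernel x θ * charKernel.conjTranspose θ y = stdAddChar (θ * (x + -y)) := by
    rw [mul_add, mul_neg, AddChar.map_add_eq_mul, AddChar.map_neg_eq_conj]
    rfl
  simp only [hterm, sum_stdAddChar_mul, Matrix.one_apply, ← sub_eq_add_neg, sub_eq_zero,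
    smul_eq_mul, mul_ite, mul_zero, one_div_mul_cancel hr0]

theorem sum_prod_shiftSign_eq {Q : Type*} [Fintype Q] [DecidableEq Q] (hr : Even r)
    {s : Equiv.Perm Q} {F : Q → Prop} [DecidablePred F] (hF : ∀ q, F (s q) ↔ F q)
    (c : Q → ZMod r) :
    ∑ d : Q → ZMod r with ∀ q, d (s q) = d q + (if F q then 2 * c q else c q),
        ∏ q, (if F q then (shiftSign (d q) (c q) : ℂ) else 1) =
      ∑ θ : Q → ZMod r with ∀ q, θ (s q) = θ q, ∏ q, stdAddChar (θ q * c q) := by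
  refine sum_prod_eq_sum_prod_of_diagonalizes
    (t := fun q x => x + (if F q then 2 * c q else c q))
    (f := fun q x => if F q then (shiftSign x (c q) : ℂ) else 1)
    (g := fun q θ => stdAddChar (θ * c q))
    (Φ := fun q => if F q then parityKernel else charKernel)
    (Ψ := fun q => if F q then (2 / r : ℂ) • parityKernel.conjTranspose
      else (1 / r : ℂ) • charKernel.conjTranspose) (fun q => ?_) (fun q => ?_) fun q x θ => ?_
  · split_ifs
    exacts [parityKernel_mul_inv hr, charKernel_mul_inv]
  · simp only [hF]
  · split_ifs
    · exact shiftSign_mul_parityKernel hr x (c q) θ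
    · rw [one_mul, charKernel, Matrix.of_apply, Matrix.of_apply, mul_add, AddChar.map_add_eq_mul]

theorem card_eq_sum_prod_stdAddChar {Q : Type*} [Fintype Q] [DecidableEq Q]
    (τ : Equiv.Perm Q) (c : Q → ZMod r) :
    (#{d : Q → ZMod r | ∀ q, d (τ q) = d q + c q} : ℂ) =
      ∑ θ : Q → ZMod r with ∀ q, θ (τ q) = θ q, ∏ q, stdAddChar (θ q * c q) := by
  rw [← sum_prod_eq_sum_prod_of_diagonalizes (t := fun q x => x + c q) (f := fun _ _ => (1 : ℂ))
    (g := fun q θ => stdAddChar (θ * c q)) (Φ := fun _ => charKernel)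
    (fun _ => charKernel_mul_inv) (fun _ => rfl) fun q x θ => ?_]
  · simp only [prod_const_one, sum_const, nsmul_eq_mul, mul_one]
  · rw [one_mul, charKernel, Matrix.of_apply, Matrix.of_apply, mul_add, AddChar.map_add_eq_mul]

end Kernel

section InvolutionOrbits

open ZMod (stdAddChar)

variable {X Q : Type*} {σ u : Equiv.Perm X}

theorem sameCycle_iff_of_mul_self_eq_one (hu : u * u = 1) {x y : X} :
    u.SameCycle x y ↔ y = x ∨ y = u x := by
  refine ⟨fun h => ?_, ?_⟩
  · obtain ⟨k, rfl⟩ := h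
    rcases Int.even_or_odd' k with ⟨m, rfl | rfl⟩
    · rw [zpow_mul, zpow_two, hu, one_zpow]
      exact Or.inl rfl
    · rw [zpow_add_one, zpow_mul, zpow_two, hu, one_zpow, one_mul]
      exact Or.inr rfl
  · rintro (rfl | rfl)
    · exact Equiv.Perm.SameCycle.refl u y
    · exact Equiv.Perm.sameCycle_apply_right.2 (Equiv.Perm.SameCycle.refl u x)

variable [Fintype X] {p : X → Q}

theorem sum_comp_eq_sum_invariant {Z M : Type*} [DecidableEq X] [Fintype Q] [DecidableEq Q]
    [Fintype Z] [DecidableEq Z] [AddCommMonoid M]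
    (hsurj : Function.Surjective p) (hp : ∀ x y, p x = p y ↔ u.SameCycle x y)
    (P : (X → Z) → Prop) [DecidablePred P] (f : (X → Z) → M) :
    ∑ D : Q → Z with P (D ∘ p), f (D ∘ p) =
      ∑ d : X → Z with (∀ x, d (u x) = d x) ∧ P d, f d := by
  refine sum_bij (fun D _ => D ∘ p) (fun D hD => ?_)
    (fun D _ E _ h => hsurj.injective_comp_right h) (fun d hd => ?_) fun D _ => rfl
  · have hu (x : X) : p (u x) = p x :=
      (hp _ _).2 (Equiv.Perm.sameCycle_apply_left.2 (Equiv.Perm.SameCycle.refl u x))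
    exact mem_filter.2 ⟨mem_univ _, fun x => congrArg D (hu x), (mem_filter.1 hD).2⟩
  · obtain ⟨hinv, hP⟩ := (mem_filter_univ _).1 hd
    have hd : (d ∘ Function.surjInv hsurj) ∘ p = d := funext fun x =>
      (apply_eq_of_sameCycle hinv ((hp _ _).1 (Function.surjInv_eq hsurj (p x)))).symm
    exact ⟨d ∘ Function.surjInv hsurj, mem_filter.2 ⟨mem_univ _, hd.symm ▸ hP⟩, hd⟩

section Fibers

variable [DecidableEq Q]

theorem filter_orbit_eq [DecidableEq X] (hu : u * u = 1)
    (hp : ∀ x y, p x = p y ↔ u.SameCycle x y) (x : X) :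
    ({y | p y = p x} : Finset X) = {x, u x} := by
  ext y
  rw [mem_filter_univ, eq_comm, hp, sameCycle_iff_of_mul_self_eq_one hu, mem_insert, mem_singleton]

theorem sum_orbit_of_fixed {M : Type*} [AddCommMonoid M] (hu : u * u = 1)
    (hp : ∀ x y, p x = p y ↔ u.SameCycle x y) (c : X → M) {x : X} (hx : u x = x) :
    ∑ y with p y = p x, c y = c x := by
  classical
  rw [filter_orbit_eq hu hp, hx, pair_eq_singleton, sum_singleton]

theorem sum_orbit_of_not_fixed {M : Type*} [AddCommMonoid M] (hu : u * u = 1)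
    (hp : ∀ x y, p x = p y ↔ u.SameCycle x y) (c : X → M) {x : X} (hx : u x ≠ x) :
    ∑ y with p y = p x, c y = c x + c (u x) := by
  classical
  rw [filter_orbit_eq hu hp, sum_pair hx.symm]

variable [Fintype Q] {r : ℕ}

theorem prod_stdAddChar_orbits [NeZero r] (D : Q → ZMod r) (c : X → ZMod r) :
    ∏ q, stdAddChar (D q * ∑ y with p y = q, c y) = ∏ x, stdAddChar (D (p x) * c x) := by
  rw [← prod_fiberwise univ p]
  refine prod_congr rfl fun q _ => ?_
  rw [mul_sum]
  exact (map_prod (stdAddChar (N := r)).toMonoidHom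
    (fun y => Multiplicative.ofAdd (D q * c y)) {y | p y = q}).trans
    (prod_congr rfl fun y hy => by
      rw [(mem_filter.1 hy).2, AddChar.toMonoidHom_apply, toAdd_ofAdd])

theorem prod_shiftSign_orbits [DecidableEq X] (hu : u * u = 1) (hsurj : Function.Surjective p)
    (hp : ∀ x y, p x = p y ↔ u.SameCycle x y) {F : Q → Prop} [DecidablePred F]
    (hF : ∀ x, F (p x) ↔ u x = x) (D : Q → ZMod r) (c : X → ZMod r) :
    ∏ q, (if F q then (shiftSign (D q) (∑ y with p y = q, c y) : ℂ) else 1) =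
      ∏ x, if u x = x then (shiftSign (D (p x)) (c x) : ℂ) else 1 := by
  rw [← prod_fiberwise univ p]
  refine prod_congr rfl fun q _ => ?_
  obtain ⟨x, rfl⟩ := hsurj q
  have hux : u (u x) = x := Equiv.Perm.congr_fun hu x
  by_cases hx : u x = x
  · rw [if_pos ((hF x).2 hx), sum_orbit_of_fixed hu hp c hx, filter_orbit_eq hu hp, hx,
      pair_eq_singleton, prod_singleton, if_pos hx]
  · rw [if_neg (mt (hF x).1 hx), filter_orbit_eq hu hp, prod_pair (Ne.symm hx), if_neg hx, hux,
      if_neg (Ne.symm hx), one_mul]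

end Fibers

variable {r : ℕ} [NeZero r]

theorem sum_prod_shiftSign_eq_sum_stdAddChar_of_orbits [DecidableEq X] [Finite Q] (hr : Even r)
    (hu : u * u = 1) (hsurj : Function.Surjective p) (hp : ∀ x y, p x = p y ↔ u.SameCycle x y)
    (hcomm : Commute σ u) {s : Equiv.Perm Q} (hs : ∀ x, s (p x) = p (σ x)) (c : X → ZMod r) :
    ∑ d : X → ZMod r with (∀ x, d (u x) = d x) ∧ ∀ x, d (σ x) = d x + (c x + c (u x)),
        ∏ x, (if u x = x then (shiftSign (d x) (c x) : ℂ) else 1) =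
      ∑ θ : X → ZMod r with (∀ x, θ (u x) = θ x) ∧ ∀ x, θ (σ x) = θ x,
        ∏ x, stdAddChar (θ x * c x) := by
  classical
  have := Fintype.ofFinite Q
  let F : Q → Prop := fun q => ∃ x, p x = q ∧ u x = x
  have hF (x : X) : F (p x) ↔ u x = x :=
    ⟨fun ⟨y, hyx, hy⟩ => (((hp y x).1 hyx).apply_eq_self_iff).1 hy, fun hx => ⟨x, rfl, hx⟩⟩
  have hFs (q : Q) : F (s q) ↔ F q := by
    obtain ⟨x, rfl⟩ := hsurj q
    rw [hs, hF, hF, ← Equiv.Perm.mul_apply, ← hcomm.eq, Equiv.Perm.mul_apply, σ.injective.eq_iff]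
  let C : Q → ZMod r := fun q => ∑ y with p y = q, c y
  have hC (x : X) : (if F (p x) then 2 * C (p x) else C (p x)) = c x + c (u x) := by
    by_cases hx : u x = x
    · rw [if_pos ((hF x).2 hx), hx, ← two_mul]
      exact congrArg _ (sum_orbit_of_fixed hu hp c hx)
    · rw [if_neg (mt (hF x).1 hx)]
      exact sum_orbit_of_not_fixed hu hp c hx
  rw [← sum_comp_eq_sum_invariant hsurj hp, ← sum_comp_eq_sum_invariant hsurj hp]
  have h := sum_prod_shiftSign_eq hr hFs C
  simp only [hsurj.forall, hs, hC, prod_shiftSign_orbits hu hsurj hp hF, C] at h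
  simp only [Function.comp_apply]
  exact h.trans (sum_congr rfl fun D _ => prod_stdAddChar_orbits D c)

theorem sum_prod_shiftSign_eq_sum_stdAddChar [DecidableEq X] (hr : Even r)
    (hu : u * u = 1) (hcomm : Commute σ u) (c : X → ZMod r) :
    ∑ d : X → ZMod r with (∀ x, d (u x) = d x) ∧ ∀ x, d (σ x) = d x + (c x + c (u x)),
        ∏ x, (if u x = x then (shiftSign (d x) (c x) : ℂ) else 1) =
      ∑ θ : X → ZMod r with (∀ x, θ (u x) = θ x) ∧ ∀ x, θ (σ x) = θ x,
        ∏ x, stdAddChar (θ x * c x) := by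
  let orbits : Setoid X := Equiv.Perm.SameCycle.setoid u
  exact sum_prod_shiftSign_eq_sum_stdAddChar_of_orbits hr hu Quotient.mk_surjective
    (p := Quotient.mk orbits) (fun _ _ => Quotient.eq) hcomm
    (s := Quotient.congr σ fun x y => (sameCycle_apply_apply_iff hcomm.symm).symm) (fun _ => rfl) c

end InvolutionOrbits

section Model

open ZMod (stdAddChar)

variable {r n : ℕ}

theorem mul_bar_eq_one_iff (w : Wreath r n) :
    w * Wreath.bar w = 1 ↔ w.1 * w.1 = 1 ∧ ∀ i, w.2 (w.1 i) = w.2 i := by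
  refine (Prod.ext_iff (α := Equiv.Perm (Fin n)) (β := Fin n → ZMod r)).trans
    (and_congr Iff.rfl (funext_iff.trans (forall_congr' fun i => ?_)))
  change w.2 (w.1 i) + -w.2 i = 0 ↔ _
  rw [← sub_eq_add_neg, sub_eq_zero]

theorem conj_fst (π w : Wreath r n) : (π * w * Wreath.tr π).1 = π.1 * w.1 * π.1⁻¹ := by
  rw [mul_fst, mul_fst, tr_fst]

theorem conj_snd (π w : Wreath r n) (i : Fin n) :
    (π * w * Wreath.tr π).2 (π.1 i) = w.2 i + (π.2 i + π.2 (w.1 i)) := by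
  rw [mul_snd, mul_snd, tr_fst, tr_snd, Equiv.Perm.inv_def, Equiv.symm_apply_apply]
  ring

theorem conj_eq_self_iff (π w : Wreath r n) : π * w * Wreath.tr π = w ↔
    Commute π.1 w.1 ∧ ∀ i, w.2 (π.1 i) = w.2 i + (π.2 i + π.2 (w.1 i)) := by
  refine (Prod.ext_iff (α := Equiv.Perm (Fin n)) (β := Fin n → ZMod r)).trans (and_congr ?_ ?_)
  · rw [conj_fst, mul_inv_eq_iff_eq_mul, Commute, SemiconjBy]
  · rw [funext_iff, ← π.1.forall_congr_right]
    exact forall_congr' fun i => by rw [conj_snd, eq_comm]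

theorem mul_tr_eq_self_iff (π x : Wreath r n) : π * Wreath.tr x = x ↔
    x.1 * x.1 = π.1 ∧ ∀ i, x.2 (x.1 i) = x.2 i + π.2 i := by
  refine (Prod.ext_iff (α := Equiv.Perm (Fin n)) (β := Fin n → ZMod r)).trans (and_congr ?_ ?_)
  · rw [mul_fst, tr_fst, mul_inv_eq_iff_eq_mul, eq_comm]
  · rw [funext_iff, ← x.1.forall_congr_right]
    refine forall_congr' fun i => ?_
    rw [mul_snd, tr_fst, tr_snd, Equiv.Perm.inv_def, Equiv.symm_apply_apply, add_comm, eq_comm]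

theorem conjAbs_one (w : AbsInv r n) : conjAbs 1 w = w :=
  Subtype.ext ((conj_eq_self_iff 1 w.1).2 ⟨Commute.one_left _, fun _ => by
    change _ = _ + ((0 : ZMod r) + 0)
    rw [add_zero, add_zero]
    rfl⟩)

theorem conjAbs_mul (π₁ π₂ : Wreath r n) (w : AbsInv r n) :
    conjAbs (π₁ * π₂) w = conjAbs π₁ (conjAbs π₂ w) := by
  refine Subtype.ext ?_
  change π₁ * π₂ * w.1 * Wreath.tr (π₁ * π₂) = π₁ * (π₂ * w.1 * Wreath.tr π₂) * Wreath.tr π₁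
  rw [tr_mul]
  simp only [mul_assoc]

variable [NeZero r]

theorem neg_one_pow_card_Bset (hr : Even r) (π w : Wreath r n) :
    (-1 : ℤ) ^ #(Bset π w) = ∏ i, if w.1 i = i then shiftSign (w.2 i) (π.2 i) else 1 := by
  have hB : Bset π w = ({i | w.1 i = i ∧
      ((w.2 i).val % 2 = 1 ∧ r / 2 ≤ (half (w.2 i) + π.2 i).val)} : Finset (Fin n)) := by
    ext i
    simp only [Bset, mem_filter_univ, mem_range]
    refine and_congr_right fun _ => ⟨?_, fun ⟨_, hle⟩ => ?_⟩
    · rintro ⟨k, -, hk, hle⟩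
      refine ⟨by lia, ?_⟩
      rwa [half, hk, show (2 * k + 1) / 2 = k by lia]
    · have hlt := ZMod.val_lt (w.2 i)
      obtain ⟨m, hm⟩ := hr
      exact ⟨(w.2 i).val / 2, by lia, by lia, hle⟩
  rw [← prod_const, hB, prod_filter]
  exact prod_congr rfl fun i _ => ite_and _ _ _ _

theorem signE_eq (hr : Even r) (π w : Wreath r n) :
    signE π w =
      (∏ i, if w.1 i = i then shiftSign (w.2 i) (π.2 i) else 1) * pairSign π.1 w.1 := by
  rw [signE, neg_one_pow_card_Bset hr, pairSign]

theorem signE_one (hr : Even r) {w : Wreath r n} (hw : w * Wreath.bar w = 1) : signE 1 w = 1 := by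
  rw [signE_eq hr]
  change _ * pairSign 1 w.1 = 1
  rw [pairSign_one ((mul_bar_eq_one_iff w).1 hw).1, mul_one]
  exact prod_eq_one fun i _ => (ite_congr rfl (fun _ => shiftSign_zero _) fun _ => rfl).trans
    (ite_self 1)

theorem prod_shiftSign_mul (hr : Even r) (π₁ π₂ w : Wreath r n) :
    (∏ i, if w.1 i = i then shiftSign (w.2 i) ((π₁ * π₂).2 i) else 1) =
      (∏ i, if (π₂ * w * Wreath.tr π₂).1 i = i then
        shiftSign ((π₂ * w * Wreath.tr π₂).2 i) (π₁.2 i) else 1) *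
      ∏ i, if w.1 i = i then shiftSign (w.2 i) (π₂.2 i) else 1 := by
  rw [← Equiv.prod_comp π₂.1 fun i => if (π₂ * w * Wreath.tr π₂).1 i = i then
    shiftSign ((π₂ * w * Wreath.tr π₂).2 i) (π₁.2 i) else 1, ← prod_mul_distrib]
  refine prod_congr rfl fun i _ => ?_
  have hfixed : (π₂ * w * Wreath.tr π₂).1 (π₂.1 i) = π₂.1 i ↔ w.1 i = i := by
    rw [conj_fst, Equiv.Perm.mul_apply, Equiv.Perm.mul_apply, Equiv.Perm.inv_def,
      Equiv.symm_apply_apply, π₂.1.injective.eq_iff]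
  by_cases hi : w.1 i = i
  · rw [if_pos hi, if_pos hi, if_pos (hfixed.2 hi), mul_snd, add_comm, shiftSign_add hr, conj_snd,
      hi, ← two_mul, mul_comm]
  · rw [if_neg hi, if_neg hi, if_neg (mt hfixed.1 hi), one_mul]

theorem signE_mul (hr : Even r) (π₁ π₂ : Wreath r n) {w : Wreath r n}
    (hw : w * Wreath.bar w = 1) :
    signE (π₁ * π₂) w = signE π₁ (π₂ * w * Wreath.tr π₂) * signE π₂ w := by
  have hpair : pairSign (π₁ * π₂).1 w.1 =
      pairSign π₁.1 (π₂ * w * Wreath.tr π₂).1 * pairSign π₂.1 w.1 := by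
    rw [mul_fst π₁, conj_fst, pairSign_mul ((mul_bar_eq_one_iff w).1 hw).1]
  rw [signE_eq hr, signE_eq hr, signE_eq hr, prod_shiftSign_mul hr, hpair]
  ring

/-- The operator `C_w ↦ sign_e(π, w) C_{π w πᵗ}`, with `C_w` encoded as `Pi.single w 1`. -/
noncomputable def modelOp (π : Wreath r n) : (AbsInv r n → ℂ) →ₗ[ℂ] (AbsInv r n → ℂ) :=
  (Pi.basisFun ℂ (AbsInv r n)).constr ℂ fun w =>
    (signE π w.1 : ℂ) • (Pi.single (conjAbs π w) (1 : ℂ) : AbsInv r n → ℂ)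

theorem modelOp_single (π : Wreath r n) (w : AbsInv r n) :
    modelOp π (Pi.single w (1 : ℂ)) =
      (signE π w.1 : ℂ) • (Pi.single (conjAbs π w) (1 : ℂ) : AbsInv r n → ℂ) := by
  rw [modelOp, ← Pi.basisFun_apply, Module.Basis.constr_basis]

/-- The representation `ρ` of the wreath product on `V_{r,n}`. -/
noncomputable def model (hr : Even r) : Representation ℂ (Wreath r n) (AbsInv r n → ℂ) where
  toFun := modelOp
  map_one' := (Pi.basisFun ℂ (AbsInv r n)).ext fun w => by
    rw [Pi.basisFun_apply, modelOp_single, signE_one hr w.2, conjAbs_one, Int.cast_one, one_smul,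
      Module.End.one_apply]
  map_mul' π₁ π₂ := (Pi.basisFun ℂ (AbsInv r n)).ext fun w => by
    rw [Module.End.mul_apply, Pi.basisFun_apply, modelOp_single, modelOp_single, map_smul,
      modelOp_single, smul_smul, signE_mul hr π₁ π₂ w.2, conjAbs_mul, Int.cast_mul, mul_comm]
    rfl

theorem trace_modelOp (π : Wreath r n) :
    LinearMap.trace ℂ _ (modelOp π) =
      ∑ w : Wreath r n with w * Wreath.bar w = 1 ∧ π * w * Wreath.tr π = w, (signE π w : ℂ) := by
  have hdiag (w : AbsInv r n) :
      (LinearMap.toMatrix (Pi.basisFun ℂ _) (Pi.basisFun ℂ _) (modelOp π)).diag w =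
        if conjAbs π w = w then (signE π w.1 : ℂ) else 0 := by
    rw [Matrix.diag_apply, LinearMap.toMatrix_apply, Pi.basisFun_apply, modelOp_single,
      Pi.basisFun_repr, Pi.smul_apply, Pi.single_apply, smul_eq_mul, mul_ite, mul_one, mul_zero]
    exact if_congr eq_comm rfl rfl
  rw [LinearMap.trace_eq_matrix_trace ℂ (Pi.basisFun ℂ _), Matrix.trace, sum_congr rfl
    fun w _ => hdiag w, ← sum_filter]
  refine sum_bij (fun w _ => w.1) (fun w hw => ?_) (fun w _ w' _ h => Subtype.ext h)
    (fun w hw => ?_) fun _ _ => rfl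
  · have hfix : conjAbs π w = w := (mem_filter.1 hw).2
    exact mem_filter.2 ⟨mem_univ _, w.2, congrArg Subtype.val hfix⟩
  · obtain ⟨hinv, hfix⟩ := (mem_filter.1 hw).2
    exact ⟨⟨w, hinv⟩, mem_filter.2 ⟨mem_univ _, Subtype.ext hfix⟩, rfl⟩

theorem sum_filter_wreath {M : Type*} [AddCommMonoid M] {P : Wreath r n → Prop} [DecidablePred P]
    {s : Finset (Equiv.Perm (Fin n))} {t : Equiv.Perm (Fin n) → Finset (Fin n → ZMod r)}
    (hP : ∀ w, P w ↔ w.1 ∈ s ∧ w.2 ∈ t w.1)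
    (f : Equiv.Perm (Fin n) → (Fin n → ZMod r) → M) :
    ∑ w with P w, f w.1 w.2 = ∑ u ∈ s, ∑ d ∈ t u, f u d :=
  let S : Finset (Wreath r n) := {w | P w}
  sum_finset_product' (γ := Equiv.Perm (Fin n)) (α := Fin n → ZMod r) S s t
    fun w => (mem_filter_univ (α := Wreath r n) w).trans (hP w)

theorem trace_modelOp_eq_sum_involutions (hr : Even r) (π : Wreath r n) :
    LinearMap.trace ℂ _ (modelOp π) =
      ∑ u : Equiv.Perm (Fin n) with u * u = 1 ∧ π.1 * u = u * π.1, (pairSign π.1 u : ℂ) *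
        ∑ θ : Fin n → ZMod r with (∀ i, θ (u i) = θ i) ∧ ∀ i, θ (π.1 i) = θ i,
          ∏ i, stdAddChar (θ i * π.2 i) := by
  have hfiber := sum_filter_wreath
    (P := fun w : Wreath r n => w * Wreath.bar w = 1 ∧ π * w * Wreath.tr π = w)
    (s := {u | u * u = 1 ∧ π.1 * u = u * π.1})
    (t := fun u => {d | (∀ i, d (u i) = d i) ∧ ∀ i, d (π.1 i) = d i + (π.2 i + π.2 (u i))})
    (fun w => by
      rw [mul_bar_eq_one_iff, conj_eq_self_iff, and_and_and_comm, mem_filter_univ, mem_filter_univ]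
      rfl)
    fun u d => (pairSign π.1 u : ℂ) * ∏ i, if u i = i then (shiftSign (d i) (π.2 i) : ℂ) else 1
  rw [trace_modelOp]
  refine Eq.trans (sum_congr rfl fun w _ => ?_) (hfiber.trans (sum_congr rfl fun u hu => ?_))
  · rw [signE_eq hr]
    push_cast
    exact mul_comm _ _
  · obtain ⟨huu, hcomm⟩ := (mem_filter.1 hu).2
    rw [← mul_sum]
    congr 1
    convert sum_prod_shiftSign_eq_sum_stdAddChar hr huu hcomm π.2

theorem card_mul_tr_eq_sum_squareRoots (π : Wreath r n) :
    (#{x : Wreath r n | π * Wreath.tr x = x} : ℂ) =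
      ∑ τ : Equiv.Perm (Fin n) with τ * τ = π.1,
        ∑ θ : Fin n → ZMod r with ∀ i, θ (τ i) = θ i, ∏ i, stdAddChar (θ i * π.2 i) := by
  have hfiber := sum_filter_wreath (P := fun x : Wreath r n => π * Wreath.tr x = x)
    (s := {τ | τ * τ = π.1}) (t := fun τ => {d | ∀ i, d (τ i) = d i + π.2 i})
    (fun x => by rw [mul_tr_eq_self_iff, mem_filter_univ, mem_filter_univ]) fun _ _ => 1
  rw [card_eq_sum_ones, hfiber, Nat.cast_sum]
  refine sum_congr rfl fun τ _ => ?_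
  rw [← card_eq_sum_ones]
  convert card_eq_sum_prod_stdAddChar τ π.2
  rfl

theorem trace_modelOp_eq_card_mul_tr_eq (hr : Even r) (π : Wreath r n) :
    LinearMap.trace ℂ _ (modelOp π) = (#{x : Wreath r n | π * Wreath.tr x = x} : ℂ) := by
  classical
  rw [trace_modelOp_eq_sum_involutions hr, card_mul_tr_eq_sum_squareRoots]
  simp only [mul_sum]
  rw [sum_comm' (t' := {θ : Fin n → ZMod r | ∀ i, θ (π.1 i) = θ i})
      (s' := fun θ => commutingInvolutions π.1 θ) fun u θ => by
        simp only [mem_filter_univ, mem_commutingInvolutions]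
        rw [commute_iff_eq]
        tauto,
    sum_comm' (t' := {θ : Fin n → ZMod r | ∀ i, θ (π.1 i) = θ i})
      (s' := fun θ => squareRoots π.1 θ) fun τ θ => by
        simp only [mem_filter_univ, mem_squareRoots]
        refine ⟨fun h => ⟨h, fun i => ?_⟩, And.left⟩
        rw [← h.1, Equiv.Perm.mul_apply, h.2, h.2]]
  refine sum_congr rfl fun θ hθ => ?_
  rw [← sum_mul, sum_const, nsmul_eq_mul]
  congr 1
  exact_mod_cast sum_pairSign_eq_card_squareRoots (mem_filter.1 hθ).2

end Model

end GelfandModel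

/-- **Gelfand model for `ℤ_r ≀ S_n`, `r` even** (Theorem `t.model`, even case):
the map `ρ` with `ρ(π) C_w = sign_e(π,w) · C_{π w πᵗ}` on the vector space `V_{r,n}`
with basis `{C_w : w ∈ I_{r,n}}` is a group homomorphism (a linear representation),
and the trace of `ρ(π)` equals `∑_{χ ∈ Irr(G(r,n))} χ(π)` for every `π`; i.e. `ρ` is a
Gelfand model for `G(r,n)`. -/
theorem gelfand_model_even
    (r n : ℕ) [NeZero r] (hn : 0 < n) (hr : Even r)
    {ι : Type} [Fintype ι] (V : ι → FDRep ℂ (Wreath r n))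
    (hV : IsCompleteIrrFamily V) :
    ∃ ρ : Representation ℂ (Wreath r n) (AbsInv r n → ℂ),
      (∀ (π : Wreath r n) (w : AbsInv r n),
        ρ π (Pi.single w (1 : ℂ)) =
          (signE π w.1 : ℂ) • (Pi.single (conjAbs π w) (1 : ℂ) : AbsInv r n → ℂ)) ∧
      ∀ π : Wreath r n,
        LinearMap.trace ℂ (AbsInv r n → ℂ) (ρ π) = ∑ i, (V i).character π := by
  refine ⟨GelfandModel.model hr, fun π w => GelfandModel.modelOp_single π w, fun π => ?_⟩
  rw [GelfandModel.sum_character_eq_card_mul_tr_eq hV]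
  exact GelfandModel.trace_modelOp_eq_card_mul_tr_eq hr π
end

section
/- For all π₁, π₂ ∈ G(r,n) and every absolute involution w ∈ I_{r,n}, sign_o(π₂π₁, w) = sign_o(π₁, w) · sign_o(π₂, π₁ w π₁ᵗ). -/
open Finset CategoryTheory

/-! For `i ≠ j`, let `ε_σ{i,j} = ±1` record whether `σ` preserves or reverses the order of `i` and
`j`. Then `sign_o(π,w)` is the product of `ε_{|π|}(e)` over the 2-cycles `e` of `|w|`. Since
`ε_{τσ}(e) = ε_τ(σ e) ε_σ(e)`, and `σ` carries the 2-cycles of `u` onto those of `σuσ⁻¹`, the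
product over the 2-cycles is a cocycle; finally `|π w πᵗ| = |π| |w| |π|⁻¹`. -/

section PairSign

variable {α : Type*} [LinearOrder α]

/-- The sign of `σ` at an unordered pair `{i, j}`: `-1` if `{i, j}` is an inversion of `σ`, and
`1` otherwise. Degenerate pairs `{i, i}` get the value `1`. -/
def pairSign (σ : Equiv.Perm α) : Sym2 α → ℤ :=
  Sym2.lift ⟨fun i j => if i < j ↔ σ i < σ j then 1 else -1, fun i j => by
    obtain rfl | hij := eq_or_ne i j
    · rfl
    · have hlt : j < i ↔ ¬i < j := by grind
      have hσlt : σ j < σ i ↔ ¬σ i < σ j := by grind [σ.injective.ne hij]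
      simp only [hlt, hσlt, not_iff_not]⟩

theorem pairSign_mk (σ : Equiv.Perm α) (i j : α) :
    pairSign σ s(i, j) = if i < j ↔ σ i < σ j then 1 else -1 :=
  rfl

theorem pairSign_mk_of_lt (σ : Equiv.Perm α) {i j : α} (hij : i < j) :
    pairSign σ s(i, j) = if σ j < σ i then -1 else 1 := by
  have hσ : σ i < σ j ↔ ¬σ j < σ i := by grind [σ.injective.ne hij.ne]
  simp only [pairSign_mk, hij, true_iff, hσ, ite_not]

theorem pairSign_mul (τ σ : Equiv.Perm α) (e : Sym2 α) :
    pairSign (τ * σ) e = pairSign σ e * pairSign τ (e.map σ) := by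
  induction e with | _ i j
  simp only [Sym2.map_mk, pairSign_mk, Equiv.Perm.mul_apply]
  grind

end PairSign

section TwoCycles

variable {α : Type*} [Fintype α] [DecidableEq α]

/-- The 2-cycles of a permutation `u`, as unordered pairs; `u` may also have longer cycles. -/
def twoCycles (u : Equiv.Perm α) : Finset (Sym2 α) :=
  {e | e ∈ Sym2.fromRel (r := fun i j => i ≠ j ∧ u i = j ∧ u j = i)
    ⟨fun _ _ ⟨hne, hij, hji⟩ => ⟨hne.symm, hji, hij⟩⟩}

theorem mk_mem_twoCycles {u : Equiv.Perm α} {i j : α} :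
    s(i, j) ∈ twoCycles u ↔ i ≠ j ∧ u i = j ∧ u j = i := by
  simp only [twoCycles, mem_filter_univ, Sym2.fromRel_prop]

theorem map_mem_twoCycles_conj (σ u : Equiv.Perm α) (e : Sym2 α) :
    e.map σ ∈ twoCycles (σ * u * σ⁻¹) ↔ e ∈ twoCycles u := by
  induction e with | _ i j
  simp [mk_mem_twoCycles]

theorem prod_twoCycles_conj {M : Type*} [CommMonoid M] (σ u : Equiv.Perm α) (f : Sym2 α → M) :
    ∏ e ∈ twoCycles (σ * u * σ⁻¹), f e = ∏ e ∈ twoCycles u, f (e.map σ) := by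
  have map_bijective : (Sym2.map σ).Bijective :=
    (Sym2.map.injective σ.injective).bijective_of_finite
  symm
  exact prod_bijective _ map_bijective (fun e => (map_mem_twoCycles_conj σ u e).symm)
    fun _ _ => rfl

end TwoCycles

section InversionSign

variable {α : Type*} [Fintype α] [LinearOrder α]

/-- `sign_o` at the level of permutations: `(-1) ^ k`, where `k` is the number of 2-cycles of `u`
that are inversions of `σ`. -/
def inversionSign (σ u : Equiv.Perm α) : ℤ :=
  ∏ e ∈ twoCycles u, pairSign σ e

theorem inversionSign_mul (τ σ u : Equiv.Perm α) :
    inversionSign (τ * σ) u = inversionSign σ u * inversionSign τ (σ * u * σ⁻¹) := by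
  simp only [inversionSign, pairSign_mul, prod_mul_distrib, prod_twoCycles_conj]

end InversionSign

section SignO

variable {r n : ℕ}

theorem Wreath.mul_fst (v w : Wreath r n) : (v * w).1 = v.1 * w.1 :=
  rfl

theorem Wreath.tr_fst (v : Wreath r n) : v.tr.1 = v.1⁻¹ :=
  rfl

theorem mem_pairSet {u : Equiv.Perm (Fin n)} {p : Fin n × Fin n} :
    p ∈ pairSet u ↔ p.1 < p.2 ∧ u p.1 = p.2 ∧ u p.2 = p.1 :=
  mem_filter_univ p

theorem prod_pairSet_eq_prod_twoCycles {M : Type*} [CommMonoid M]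
    (u : Equiv.Perm (Fin n)) (f : Sym2 (Fin n) → M) :
    ∏ p ∈ pairSet u, f s(p.1, p.2) = ∏ e ∈ twoCycles u, f e := by
  refine prod_nbij (fun p => s(p.1, p.2)) ?mapsTo ?injOn ?surjOn fun _ _ => rfl
  case mapsTo =>
    intro p hp
    obtain ⟨hlt, hcycle⟩ := mem_pairSet.mp hp
    exact mk_mem_twoCycles.mpr ⟨hlt.ne, hcycle⟩
  case injOn =>
    intro p hp q hq hpq
    have hp_lt : p.1 < p.2 := (mem_pairSet.mp hp).1
    have hq_lt : q.1 < q.2 := (mem_pairSet.mp hq).1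
    grind [Sym2.eq_iff]
  case surjOn =>
    intro e he
    induction e with | _ i j
    obtain ⟨hne, hij, hji⟩ := mk_mem_twoCycles.mp he
    obtain hlt | hgt := hne.lt_or_gt
    · exact ⟨(i, j), mem_pairSet.mpr ⟨hlt, hij, hji⟩, rfl⟩
    · exact ⟨(j, i), mem_pairSet.mpr ⟨hgt, hji, hij⟩, Sym2.eq_swap⟩

theorem signO_eq_inversionSign (π w : Wreath r n) :
    signO π w = inversionSign π.1 w.1 := by
  have inter_eq : invPairs π.1 ∩ pairSet w.1 = {p ∈ pairSet w.1 | π.1 p.2 < π.1 p.1} := by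
    ext p
    simp only [invPairs, mem_inter, mem_filter, mem_univ, true_and, mem_pairSet]
    tauto
  calc signO π w
      = ∏ p ∈ pairSet w.1, if π.1 p.2 < π.1 p.1 then -1 else 1 := by
        rw [signO, inter_eq, ← prod_const, prod_filter]
    _ = ∏ p ∈ pairSet w.1, pairSign π.1 s(p.1, p.2) :=
        prod_congr rfl fun p hp => (pairSign_mk_of_lt π.1 (mem_pairSet.mp hp).1).symm
    _ = inversionSign π.1 w.1 := prod_pairSet_eq_prod_twoCycles w.1 (pairSign π.1)

theorem signO_mul_general (π₁ π₂ w : Wreath r n) :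
    signO (π₂ * π₁) w = signO π₁ w * signO π₂ (π₁ * w * Wreath.tr π₁) := by
  simp only [signO_eq_inversionSign, Wreath.mul_fst, Wreath.tr_fst, inversionSign_mul]

end SignO

/-- **Multiplicativity of `sign_o`** (equation (3) of the paper, Part 1 of the proof of
Theorem `t.model` for odd `r`): for all `π₁, π₂ ∈ G(r,n)` and every absolute involution
`w`, `sign_o(π₂π₁, w) = sign_o(π₁, w) · sign_o(π₂, π₁ w π₁ᵗ)`. -/
theorem signO_mul
    (r n : ℕ) [NeZero r] (hn : 0 < n) (π₁ π₂ w : Wreath r n)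
    (hw : w * Wreath.bar w = 1) :
    signO (π₂ * π₁) w = signO π₁ w * signO π₂ (π₁ * w * Wreath.tr π₁) :=
  signO_mul_general π₁ π₂ w
end

section
/- Let d be odd and let v = (σ,z) ∈ G(r,d) with σ a d-cycle (its support is all of {1,…,d}). Then w := v·v̄ satisfies: |w| = σ² is a single d-cycle, and the total color of w is 0, i.e. ∑_{i=1}^{d} z_w(i) = 0 in ℤ/rℤ. Moreover, for every w ∈ G(r,d) such that |w| is a d-cycle and ∑_i z_w(i) = 0, the number of elements v ∈ G(r,d) with |v| a d-cycle and v·v̄ = w equals r. -/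
open Finset CategoryTheory

/-- `σ` is a single `d`-cycle on all of `Fin d`: every point can be moved to every
other point by a power of `σ` (for `d = 1` this is the identity permutation). -/
def IsFullCycle {d : ℕ} (σ : Equiv.Perm (Fin d)) : Prop :=
  ∀ x y : Fin d, ∃ k : ℕ, (σ ^ k) x = y

/-!
Since `v * bar v = (σ ^ 2, z ∘ σ - z)` for `v = (σ, z)`, finding `v` from `w = (τ, c)` splits into
extracting a square root `σ` of `τ` and then a discrete primitive `z` of `c` along `σ`. Squaring
permutes the `d`-cycles because `2` is invertible modulo the odd number `d`. The partial sums of `c`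
along the cycle `σ` define a primitive exactly when the total sum of `c` vanishes, and a primitive
is determined by its value at one point, which leaves `r` choices.
-/

section Powers

variable {α : Type*} {σ : Equiv.Perm α} {k : ℕ}

theorem isCycleOn_pow_of_coprime {s : Finset α} (hσ : σ.IsCycleOn s) (hk : k.Coprime #s) :
    (σ ^ k).IsCycleOn s := by
  refine ⟨hσ.1.perm_pow k, fun x hx y hy => ?_⟩
  obtain ⟨n, -, rfl⟩ := hσ.exists_pow_eq hx hy
  obtain ⟨l, -, hl⟩ := Nat.exists_mul_mod_eq_of_coprime n hk (card_pos.2 ⟨x, hx⟩).ne'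
  refine ⟨l, ?_⟩
  rw [zpow_natCast, ← pow_mul]
  exact (hσ.pow_apply_eq_pow_apply hx).2 hl

variable [Fintype α]

theorem pow_card_eq_one_of_isCycleOn_univ (hσ : σ.IsCycleOn (univ : Finset α)) :
    σ ^ Fintype.card α = 1 :=
  Equiv.ext fun x => hσ.pow_card_apply (mem_univ x)

theorem existsUnique_isCycleOn_univ_and_pow_eq (hσ : σ.IsCycleOn (univ : Finset α))
    (hk : k.Coprime (Fintype.card α)) :
    ∃! τ : Equiv.Perm α, τ.IsCycleOn (univ : Finset α) ∧ τ ^ k = σ := by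
  obtain _ | _ := isEmpty_or_nonempty α
  · exact ⟨σ, ⟨hσ, Subsingleton.elim _ _⟩, fun _ _ => Subsingleton.elim _ _⟩
  obtain ⟨l, -, hl⟩ := Nat.exists_mul_mod_eq_of_coprime 1 hk Fintype.card_ne_zero
  have pow_pow_eq_self {τ : Equiv.Perm α} (hτ : τ.IsCycleOn (univ : Finset α)) :
      (τ ^ k) ^ l = τ := by
    rw [← pow_mul, pow_eq_pow_of_modEq hl (pow_card_eq_one_of_isCycleOn_univ hτ), pow_one]
  have pow_root : (σ ^ l) ^ k = σ := by rw [pow_right_comm, pow_pow_eq_self hσ]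
  refine ⟨σ ^ l, ⟨?_, pow_root⟩, ?_⟩
  · refine Equiv.Perm.IsCycleOn.of_pow (n := k) (by rwa [pow_root]) ?_
    simpa only [coe_univ, Set.bijOn_univ] using (σ ^ l).bijective
  · rintro τ ⟨hτ, rfl⟩
    exact (pow_pow_eq_self hτ).symm

end Powers

section Primitives

variable {α A : Type*} {σ : Equiv.Perm α} {s : Finset α} {a : α}

theorem apply_eq_apply_of_isCycleOn {f : α → A} (hσ : σ.IsCycleOn s)
    (hf : ∀ x ∈ s, f (σ x) = f x) {b : α} (ha : a ∈ s) (hb : b ∈ s) : f b = f a := by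
  have along_orbit (n : ℕ) : f ((σ ^ n) a) = f a := by
    induction n with
    | zero => rfl
    | succ n ih => rw [pow_succ', Equiv.Perm.mul_apply, hf _ (hσ.1.mapsTo.perm_pow n ha), ih]
  obtain ⟨n, -, rfl⟩ := hσ.exists_pow_eq ha hb
  exact along_orbit n

theorem birkhoffSum_card_eq_sum_of_isCycleOn [AddCommMonoid A] (hσ : σ.IsCycleOn s) (ha : a ∈ s)
    (c : α → A) : birkhoffSum σ c #s a = ∑ x ∈ s, c x := by
  simp only [birkhoffSum, Equiv.Perm.iterate_eq_pow]
  refine sum_nbij (fun n => (σ ^ n) a) (fun n _ => hσ.1.mapsTo.perm_pow n ha) ?_ ?_ fun _ _ => rfl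
  · intro m hm n hn hmn
    exact ((hσ.pow_apply_eq_pow_apply ha).1 hmn).eq_of_lt_of_lt (mem_range.1 hm) (mem_range.1 hn)
  · intro x hx
    obtain ⟨n, hn, rfl⟩ := hσ.exists_pow_eq ha hx
    exact ⟨n, mem_range.2 hn, rfl⟩

theorem periodic_birkhoffSum_of_isCycleOn [AddCommMonoid A] (hσ : σ.IsCycleOn s) (ha : a ∈ s)
    {c : α → A} (hc : ∑ x ∈ s, c x = 0) : Function.Periodic (birkhoffSum σ c · a) #s := by
  intro n
  simp only [add_comm n, birkhoffSum_add, birkhoffSum_card_eq_sum_of_isCycleOn hσ ha, hc, zero_add,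
    Equiv.Perm.iterate_eq_pow, hσ.pow_card_apply ha]

variable [AddCommGroup A] {c : α → A}

theorem exists_primitive_of_isCycleOn (hσ : σ.IsCycleOn s) (ha : a ∈ s)
    (hc : ∑ x ∈ s, c x = 0) (b : A) :
    ∃ z : α → A, z a = b ∧ ∀ x ∈ s, z (σ x) - z x = c x := by
  have birkhoffSum_congr {m n : ℕ} (h : (σ ^ m) a = (σ ^ n) a) :
      birkhoffSum σ c m a = birkhoffSum σ c n a := by
    have periodic := periodic_birkhoffSum_of_isCycleOn hσ ha hc
    rw [← periodic.map_mod_nat m, ← periodic.map_mod_nat n,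
      (hσ.pow_apply_eq_pow_apply ha).1 h]
  choose! index _ pow_index using fun x (hx : x ∈ s) => hσ.exists_pow_eq ha hx
  refine ⟨fun x => b + birkhoffSum σ c (index x) a, ?_, fun x hx => ?_⟩
  · have base : birkhoffSum σ c (index a) a = birkhoffSum σ c 0 a :=
      birkhoffSum_congr (pow_index a ha)
    simp only [base, birkhoffSum_zero, add_zero]
  · have step : birkhoffSum σ c (index (σ x)) a = birkhoffSum σ c (index x + 1) a := by
      apply birkhoffSum_congr
      rw [pow_index _ (hσ.1.mapsTo hx), pow_succ', Equiv.Perm.mul_apply, pow_index x hx]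
    simp only [step, birkhoffSum_succ, Equiv.Perm.iterate_eq_pow, pow_index x hx,
      add_sub_add_left_eq_sub, add_sub_cancel_left]

theorem eqOn_of_isCycleOn_of_sub_eq {z z' : α → A} (hσ : σ.IsCycleOn s) (ha : a ∈ s)
    (hza : z a = z' a) (hz : ∀ x ∈ s, z (σ x) - z x = z' (σ x) - z' x) : Set.EqOn z z' s := by
  intro x hx
  have hinv : ∀ y ∈ s, (z - z') (σ y) = (z - z') y := fun y hy =>
    sub_eq_sub_iff_sub_eq_sub.1 (hz y hy)
  have hconst : (z - z') x = (z - z') a := apply_eq_apply_of_isCycleOn hσ hinv ha hx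
  rwa [Pi.sub_apply, Pi.sub_apply, hza, sub_self, sub_eq_zero] at hconst

theorem natCard_primitives_of_isCycleOn_univ [Fintype α] [Nonempty α]
    (hσ : σ.IsCycleOn (univ : Finset α)) (hc : ∑ x, c x = 0) :
    Nat.card {z : α → A // ∀ x, z (σ x) - z x = c x} = Nat.card A := by
  obtain ⟨a⟩ := ‹Nonempty α›
  refine Nat.card_eq_of_bijective (fun z => z.1 a) ⟨?_, fun b => ?_⟩
  · rintro ⟨z, hz⟩ ⟨z', hz'⟩ hza
    refine Subtype.ext (funext fun x => ?_)
    exact eqOn_of_isCycleOn_of_sub_eq hσ (mem_univ a) hza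
      (fun y _ => (hz y).trans (hz' y).symm) (mem_univ x)
  · obtain ⟨z, hza, hz⟩ := exists_primitive_of_isCycleOn hσ (mem_univ a) hc b
    exact ⟨⟨z, fun x => hz x (mem_univ x)⟩, hza⟩

end Primitives

theorem isFullCycle_iff_isCycleOn_univ {d : ℕ} {σ : Equiv.Perm (Fin d)} :
    IsFullCycle σ ↔ σ.IsCycleOn (univ : Finset (Fin d)) := by
  refine ⟨fun h => ⟨?_, fun x _ y _ => ?_⟩, fun h x y => ?_⟩
  · simpa only [coe_univ, Set.bijOn_univ] using σ.bijective
  · obtain ⟨n, hn⟩ := h x y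
    exact ⟨n, hn⟩
  · obtain ⟨n, -, hn⟩ := h.exists_pow_eq (mem_univ x) (mem_univ y)
    exact ⟨n, hn⟩

namespace Wreath

variable {r n : ℕ}

theorem mul_bar (v : Wreath r n) : v * bar v = ⟨v.1 ^ 2, fun i => v.2 (v.1 i) - v.2 i⟩ :=
  Prod.ext (sq v.1).symm (funext fun _ => (sub_eq_add_neg _ _).symm)

theorem mul_bar_eq_iff {v w : Wreath r n} :
    v * bar v = w ↔ v.1 ^ 2 = w.1 ∧ ∀ i, v.2 (v.1 i) - v.2 i = w.2 i := by
  rw [mul_bar]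
  exact Prod.ext_iff.trans (and_congr_right fun _ => funext_iff)

theorem sum_mul_bar_snd (v : Wreath r n) : ∑ i, (v * bar v).2 i = 0 := by
  rw [mul_bar, sum_sub_distrib, Equiv.sum_comp v.1 v.2, sub_self]

theorem isFullCycle_mul_bar_fst (hn : Odd n) {v : Wreath r n} (hv : IsFullCycle v.1) :
    IsFullCycle (v * bar v).1 := by
  rw [isFullCycle_iff_isCycleOn_univ] at hv ⊢
  rw [mul_bar]
  exact isCycleOn_pow_of_coprime hv (by rwa [card_fin, Nat.coprime_two_left])

theorem natCard_isFullCycle_and_mul_bar_eq (hn : Odd n) {w : Wreath r n} (hw : IsFullCycle w.1)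
    (hsum : ∑ i, w.2 i = 0) :
    Nat.card {v : Wreath r n // IsFullCycle v.1 ∧ v * bar v = w} = r := by
  have : Nonempty (Fin n) := ⟨0, hn.pos⟩
  obtain ⟨σ, ⟨hσ, hσw⟩, hσ_unique⟩ := existsUnique_isCycleOn_univ_and_pow_eq
    (isFullCycle_iff_isCycleOn_univ.1 hw) (k := 2) (by rwa [Fintype.card_fin, Nat.coprime_two_left])
  have mem_iff (v : Wreath r n) : IsFullCycle v.1 ∧ v * bar v = w ↔
      v.1 = σ ∧ ∀ i, v.2 (σ i) - v.2 i = w.2 i := by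
    rw [isFullCycle_iff_isCycleOn_univ, mul_bar_eq_iff]
    constructor
    · rintro ⟨hv, hvw, hz⟩
      obtain rfl := hσ_unique v.1 ⟨hv, hvw⟩
      exact ⟨rfl, hz⟩
    · rintro ⟨rfl, hz⟩
      exact ⟨hσ, hσw, hz⟩
  calc Nat.card {v : Wreath r n // IsFullCycle v.1 ∧ v * bar v = w}
      = Nat.card ({τ // τ = σ} × {z : Fin n → ZMod r // ∀ i, z (σ i) - z i = w.2 i}) :=
        Nat.card_congr <| (Equiv.subtypeEquivRight mem_iff).trans <|
          Equiv.subtypeProdEquivProd (p := fun τ => τ = σ)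
            (q := fun z : Fin n → ZMod r => ∀ i, z (σ i) - z i = w.2 i)
    _ = Nat.card (ZMod r) := by
        rw [Nat.card_prod, Nat.card_unique, one_mul, natCard_primitives_of_isCycleOn_univ hσ hsum]
    _ = r := Nat.card_zmod r

end Wreath

/-- **Absolute squares of single cycles, odd length** (Observation, part 1):
for odd `d`, if `v = (σ,z) ∈ G(r,d)` with `σ` a `d`-cycle, then `w := v·v̄` has
`|w| = σ²` a single `d`-cycle and total color `z(w) = 0`; and every `w` with `|w|` a
`d`-cycle and total color `0` arises from exactly `r` such `v`. -/
theorem absolute_square_of_odd_cycle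
    (r d : ℕ) [NeZero r] (hd : Odd d) :
    (∀ v : Wreath r d, IsFullCycle v.1 →
      (v * Wreath.bar v).1 = v.1 ^ 2 ∧ IsFullCycle (v * Wreath.bar v).1 ∧
        ∑ i, (v * Wreath.bar v).2 i = 0) ∧
    (∀ w : Wreath r d, IsFullCycle w.1 → ∑ i, w.2 i = 0 →
      Nat.card {v : Wreath r d // IsFullCycle v.1 ∧ v * Wreath.bar v = w} = r) := by
  refine ⟨fun v hv => ⟨?_, ?_, ?_⟩, fun w hw hsum => ?_⟩
  · exact congrArg Prod.fst (Wreath.mul_bar v)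
  · exact Wreath.isFullCycle_mul_bar_fst hd hv
  · exact Wreath.sum_mul_bar_snd v
  · exact Wreath.natCard_isFullCycle_and_mul_bar_eq hd hw hsum
end
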